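/- arXiv:1104.4935 — 6 statements merged into one kernel-verified Lean document; each statement's English description precedes it below -/
import Mathlib

section
/- Let A be a C*-algebra possessing a countable left approximate identity, i.e. a sequence (v_k)_{k∈ℕ} in A such that ‖v_k a − a‖ → 0 for every a ∈ A. Then there exists a sequence (u_n)_{n≥0} in A with u_0 = 0, 0 ≤ u_n ≤ u_{n+1} and ‖u_n‖ ≤ 1 for every n, such that ‖a u_n − a‖ → 0 and ‖u_n a − a‖ → 0 for every a ∈ A, and moreover for every a ∈ A, every sequence (η_i)_{i≥1} of complex numbers with |η_i| = 1, and all integers m > n ≥ 0 the following three inequalities hold: (1) ‖∑_{i=n+1}^{m} η_i √(u_i − u_{i−1})‖ ≤ 4; (2) ‖a · ∑_{i=n+1}^{m} η_i √(u_i − u_{i−1})‖ ≤ 4‖a‖; (3) ‖a · ∑_{i=n+1}^{m} η_i √(u_i − u_{i−1})‖² ≤ 10·(max_{n ≤ i ≤ m} ‖a u_i − a‖)·‖a‖ + 2^{−(2n−1)}·‖a‖². -/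
open Filter

/-!
Some `h ≥ 0` dominates every `v k * star (v k)` up to a scalar, so a bounded sequence of
self-adjoint elements that is a left approximate unit on `h` is one on all of `A`. Take
`u n = f n (h)`, where the functions `f n` increase to `1` on `(0, ∞)` and `f (n + 1) = 1` wherever
`f n ≠ 0`. Then `u n * u (n + 1) = u n`, which makes `√(u i - u (i - 1))` and `√(u j - u (j - 1))`
orthogonal as soon as `|i - j| ≥ 2`. Hence in `S = ∑ η i √(u i - u (i - 1))` the terms of even index
are pairwise orthogonal, and so are those of odd index; with the parallelogram law this gives
`S * star S ≤ 2 ∑ (u i - u (i - 1)) = 2 (u m - u n)`, and the norm bounds follow.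
-/

open scoped NNReal Topology

section Algebra

lemma mul_eq_left_of_lt {M : Type*} [Semigroup M] {u : ℕ → M} (hu : ∀ n, u n * u (n + 1) = u n)
    {i j : ℕ} (hij : i < j) : u i * u j = u i := by
  induction j, hij using Nat.le_induction with
  | base => exact hu i
  | succ j _ ih => rw [← ih, mul_assoc, hu]

lemma sub_mul_sub_eq_zero {R : Type*} [NonUnitalRing R] {u : ℕ → R}
    (hu : ∀ n, u n * u (n + 1) = u n) {i j : ℕ} (hij : i + 2 ≤ j) :
    (u i - u (i - 1)) * (u j - u (j - 1)) = 0 := by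
  simp only [sub_mul, mul_sub, mul_eq_left_of_lt hu (show i < j by lia),
    mul_eq_left_of_lt hu (show i < j - 1 by lia), mul_eq_left_of_lt hu (show i - 1 < j by lia),
    mul_eq_left_of_lt hu (show i - 1 < j - 1 by lia), sub_self]

lemma sum_Icc_sub_pred {G : Type*} [AddCommGroup G] (u : ℕ → G) {n m : ℕ} (hnm : n ≤ m) :
    ∑ i ∈ Finset.Icc (n + 1) m, (u i - u (i - 1)) = u m - u n := by
  rw [← Finset.Ico_add_one_right_eq_Icc, ← Finset.sum_Ico_add']
  exact Finset.sum_Ico_sub u hnm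

lemma sum_mul_star_sum_of_pairwise {ι R : Type*} [NonUnitalSemiring R] [StarRing R]
    {s : Finset ι} {x : ι → R} (hx : (s : Set ι).Pairwise fun i j => x i * star (x j) = 0) :
    (∑ i ∈ s, x i) * star (∑ i ∈ s, x i) = ∑ i ∈ s, x i * star (x i) := by
  rw [star_sum, Finset.sum_mul_sum]
  exact Finset.sum_congr rfl fun i hi => Finset.sum_eq_single_of_mem i hi
    fun j hj hji => hx hi hj hji.symm

variable {R : Type*} [NonUnitalRing R] [PartialOrder R] [StarRing R] [StarOrderedRing R]

lemma add_mul_star_add_le (x y : R) :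
    (x + y) * star (x + y) ≤ 2 • (x * star x + y * star y) := by
  have parallelogram : 2 • (x * star x + y * star y) - (x + y) * star (x + y) =
      (x - y) * star (x - y) := by
    simp only [star_add, star_sub]
    noncomm_ring
  rw [← sub_nonneg, parallelogram]
  exact mul_star_self_nonneg _

lemma sum_mul_star_sum_le (s : Finset ℕ) {x : ℕ → R}
    (hx : ∀ i j, i + 2 ≤ j → x i * star (x j) = 0) :
    (∑ i ∈ s, x i) * star (∑ i ∈ s, x i) ≤ 2 • ∑ i ∈ s, x i * star (x i) := by
  have hx' (i j : ℕ) (hij : i % 2 = j % 2) (hne : i ≠ j) : x i * star (x j) = 0 := by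
    rcases hne.lt_or_gt with h | h
    · exact hx i j (by lia)
    · simpa using congrArg star (hx j i (by lia))
  have even_sum := sum_mul_star_sum_of_pairwise (s := s.filter (· % 2 = 0)) (x := x)
    fun i hi j hj hne => hx' i j (by simp_all) hne
  have odd_sum := sum_mul_star_sum_of_pairwise (s := s.filter (¬ · % 2 = 0)) (x := x)
    fun i hi j hj hne => hx' i j (by simp_all) hne
  rw [← Finset.sum_filter_add_sum_filter_not s (· % 2 = 0) x,
    ← Finset.sum_filter_add_sum_filter_not s (· % 2 = 0) fun i => x i * star (x i),
    ← even_sum, ← odd_sum]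
  exact add_mul_star_add_le _ _

end Algebra

lemma exists_nonneg_forall_le_smul {ι E : Type*} [Countable ι] [NormedAddCommGroup E]
    [NormedSpace ℝ E] [CompleteSpace E] [PartialOrder E] [IsOrderedAddMonoid E]
    [IsOrderedModule ℝ E] [OrderClosedTopology E] {w : ι → E} (hw : ∀ k, 0 ≤ w k) :
    ∃ h : E, 0 ≤ h ∧ ∀ k, ∃ c : ℝ, w k ≤ c • h := by
  obtain ⟨ε, hε, _, hsum, -⟩ := NNReal.exists_pos_sum_of_countable one_ne_zero ι
  let t (k : ι) : ℝ := ε k / (1 + ‖w k‖)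
  have t_pos (k : ι) : 0 < t k := div_pos (hε k) (by positivity)
  have term_nonneg (k : ι) : 0 ≤ t k • w k := smul_nonneg (t_pos k).le (hw k)
  have norm_term_le (k : ι) : ‖t k • w k‖ ≤ ε k := by
    rw [norm_smul, Real.norm_of_nonneg (t_pos k).le, div_mul_eq_mul_div,
      div_le_iff₀ (by positivity)]
    gcongr
    linarith
  have summable_term : Summable fun k => t k • w k :=
    .of_norm_bounded (NNReal.summable_coe.mpr hsum.summable) norm_term_le
  refine ⟨∑' k, t k • w k, tsum_nonneg term_nonneg, fun k => ⟨(t k)⁻¹, ?_⟩⟩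
  calc w k = (t k)⁻¹ • t k • w k := (inv_smul_smul₀ (t_pos k).ne' _).symm
    _ ≤ (t k)⁻¹ • ∑' k, t k • w k :=
      smul_le_smul_of_nonneg_left (summable_term.le_tsum k fun j _ => term_nonneg j)
        (inv_nonneg.mpr (t_pos k).le)

lemma tendsto_mul_of_dense_span {𝕜 B α : Type*} [Semiring 𝕜] [NonUnitalSeminormedRing B]
    [Module 𝕜 B] [ContinuousConstSMul 𝕜 B] [SMulCommClass 𝕜 B B] {l : Filter α} {u : α → B}
    {C : ℝ≥0} (hu : ∀ n, ‖u n‖ ≤ C) {s : Set B} (hs : Dense (Submodule.span 𝕜 s : Set B))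
    (h : ∀ x ∈ s, Tendsto (fun n => u n * x) l (𝓝 x)) (x : B) :
    Tendsto (fun n => u n * x) l (𝓝 x) := by
  have hlip (n : α) : LipschitzWith C (u n * ·) :=
    .of_dist_le_mul fun y z => by
      rw [dist_eq_norm, dist_eq_norm, ← mul_sub]
      exact (norm_mul_le _ _).trans (by gcongr; exact hu n)
  have hclosed : IsClosed {x | Tendsto (fun n => u n * x) l (𝓝 x)} :=
    (LipschitzWith.uniformEquicontinuous _ C hlip).equicontinuous.isClosed_setOfPred_tendsto
      continuous_id
  refine hclosed.closure_subset_iff.mpr (fun y hy => ?_) (hs x)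
  induction hy using Submodule.span_induction with
  | mem y hy => exact h y hy
  | zero => simpa using tendsto_const_nhds
  | add y z _ _ hy hz => simpa only [Set.mem_ofPred_eq, mul_add] using hy.add hz
  | smul c y _ hy => simpa only [Set.mem_ofPred_eq, mul_smul_comm] using hy.const_smul c

lemma dense_span_iUnion_range_mul_of_tendsto {𝕜 ι B : Type*} [Semiring 𝕜]
    [NonUnitalSeminormedRing B] [Module 𝕜 B] {l : Filter ι} [l.NeBot] {v : ι → B}
    (hv : ∀ a, Tendsto (fun k => ‖v k * a - a‖) l (𝓝 0)) :
    Dense (Submodule.span 𝕜 (⋃ k, Set.range (v k * ·)) : Set B) :=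
  Dense.mono Submodule.subset_span fun a =>
    mem_closure_of_tendsto (tendsto_iff_norm_sub_tendsto_zero.mpr (hv a))
      (.of_forall fun k => Set.mem_iUnion.mpr ⟨k, a, rfl⟩)

section Cutoff

/-- A piecewise linear approximation of the indicator function of `(0, ∞)`: for `1 ≤ n` it rises
from `0` to `1` between `1 / (2 ^ n - 1)` and `2 / (2 ^ n - 1)`. The slope `2 ^ n - 1`, rather than
`2 ^ n`, makes `cutoff 0` vanish identically, and it still more than doubles at each step, so that
`cutoff (n + 1) = 1` wherever `cutoff n ≠ 0`. -/
noncomputable def cutoff (n : ℕ) (x : ℝ) : ℝ := max 0 (min 1 ((2 ^ n - 1) * x - 1))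

@[fun_prop]
lemma continuous_cutoff (n : ℕ) : Continuous (cutoff n) := by
  unfold cutoff
  fun_prop

@[simp]
lemma cutoff_apply_zero (n : ℕ) : cutoff n 0 = 0 := by simp [cutoff]

lemma cutoff_zero : cutoff 0 = 0 := by
  ext x
  simp [cutoff]

lemma cutoff_nonneg (n : ℕ) (x : ℝ) : 0 ≤ cutoff n x := le_max_left _ _

lemma cutoff_le_one (n : ℕ) (x : ℝ) : cutoff n x ≤ 1 := by simp [cutoff]

lemma cutoff_eq_zero {n : ℕ} {x : ℝ} (hx : (2 ^ n - 1) * x ≤ 1) : cutoff n x = 0 :=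
  max_eq_left ((min_le_right _ _).trans (sub_nonpos.mpr hx))

lemma cutoff_eq_one {n : ℕ} {x : ℝ} (hx : 2 ≤ (2 ^ n - 1) * x) : cutoff n x = 1 := by
  simp [cutoff, min_eq_left (show 1 ≤ (2 ^ n - 1) * x - 1 by linarith)]

lemma cutoff_eq_zero_or_succ_eq_one (n : ℕ) (x : ℝ) : cutoff n x = 0 ∨ cutoff (n + 1) x = 1 := by
  rcases le_or_gt ((2 ^ n - 1) * x) 1 with hx | hx
  · exact .inl (cutoff_eq_zero hx)
  · have hpow : (1 : ℝ) ≤ 2 ^ n := one_le_pow₀ one_le_two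
    have hx0 : 0 < x := pos_of_mul_pos_right (one_pos.trans hx) (sub_nonneg.mpr hpow)
    exact .inr (cutoff_eq_one (by rw [pow_succ]; linarith))

lemma cutoff_mul_cutoff_succ (n : ℕ) (x : ℝ) : cutoff n x * cutoff (n + 1) x = cutoff n x := by
  rcases cutoff_eq_zero_or_succ_eq_one n x with h | h <;> simp [h]

lemma cutoff_le_cutoff_succ (n : ℕ) (x : ℝ) : cutoff n x ≤ cutoff (n + 1) x := by
  rcases cutoff_eq_zero_or_succ_eq_one n x with h | h
  · exact h ▸ cutoff_nonneg _ _
  · exact h ▸ cutoff_le_one _ _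

lemma abs_cutoff_succ_mul_sub_le (n : ℕ) {x : ℝ} (hx : 0 ≤ x) :
    |cutoff (n + 1) x * x - x| ≤ 2 * (1 / 2) ^ n := by
  rcases le_or_gt 2 ((2 ^ (n + 1) - 1) * x) with h | h
  · rw [cutoff_eq_one h, one_mul, sub_self, abs_zero]
    positivity
  · have hpow : (1 : ℝ) ≤ 2 ^ n := one_le_pow₀ one_le_two
    calc |cutoff (n + 1) x * x - x| = (1 - cutoff (n + 1) x) * x := by
          rw [abs_sub_comm, ← one_sub_mul,
            abs_of_nonneg (mul_nonneg (sub_nonneg.mpr (cutoff_le_one _ _)) hx)]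
      _ ≤ x := mul_le_of_le_one_left hx (sub_le_self _ (cutoff_nonneg _ _))
      _ ≤ 2 / 2 ^ n := by
          rw [le_div_iff₀ (by positivity)]
          rw [pow_succ] at h
          nlinarith
      _ = 2 * (1 / 2) ^ n := by rw [one_div_pow, mul_one_div]

end Cutoff

lemma mul_eq_zero_of_mul_self_mul_eq_zero {R : Type*} [NonUnitalNormedRing R] [StarRing R]
    [CStarRing R] {b c : R} (hb : IsSelfAdjoint b) (h : b * b * c = 0) : b * c = 0 := by
  rw [← CStarRing.star_mul_self_eq_zero_iff, star_mul, hb.star_eq, mul_assoc, ← mul_assoc b, h,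
    mul_zero]

section CStarAlgebra

variable {A : Type*} [NonUnitalCStarAlgebra A] [PartialOrder A] [StarOrderedRing A]

section ApproximateUnit

lemma norm_mul_sub_self_sq_le {h x u : A} (hu : IsSelfAdjoint u) (hx : x * star x ≤ h) :
    ‖u * x - x‖ ^ 2 ≤ (1 + ‖u‖) * ‖u * h - h‖ := by
  obtain ⟨y, hy⟩ := CStarAlgebra.nonneg_iff_eq_mul_star_self.mp (sub_nonneg.mpr hx)
  have decomposition : (u * x - x) * star (u * x - x) + (u * y - y) * star (u * y - y) =
      (u * h - h) * u - (u * h - h) := by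
    rw [show h = x * star x + y * star y by rw [← hy]; abel]
    simp only [star_sub, star_mul, hu.star_eq]
    noncomm_ring
  calc ‖u * x - x‖ ^ 2 = ‖(u * x - x) * star (u * x - x)‖ := by
        rw [CStarRing.norm_self_mul_star, sq]
    _ ≤ ‖(u * h - h) * u - (u * h - h)‖ := by
        refine CStarAlgebra.norm_le_norm_of_nonneg_of_le (mul_star_self_nonneg _) ?_
        exact decomposition ▸ le_add_of_nonneg_right (mul_star_self_nonneg _)
    _ ≤ ‖u * h - h‖ * ‖u‖ + ‖u * h - h‖ :=
        (norm_sub_le _ _).trans (by gcongr; exact norm_mul_le _ _)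
    _ = (1 + ‖u‖) * ‖u * h - h‖ := by ring

lemma tendsto_mul_of_mul_star_le_smul {α : Type*} {l : Filter α} {u : α → A} {C c : ℝ} {h x : A}
    (hu : ∀ n, IsSelfAdjoint (u n)) (hC : ∀ n, ‖u n‖ ≤ C)
    (hh : Tendsto (fun n => u n * h) l (𝓝 h)) (hx : x * star x ≤ c • h) :
    Tendsto (fun n => u n * x) l (𝓝 x) := by
  have hch : Tendsto (fun n => (1 + C) * ‖u n * (c • h) - c • h‖) l (𝓝 0) := by
    have hsmul : Tendsto (fun n => u n * (c • h)) l (𝓝 (c • h)) := by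
      simpa only [mul_smul_comm] using hh.const_smul c
    simpa using (tendsto_iff_norm_sub_tendsto_zero.mp hsmul).const_mul (1 + C)
  have hsq : Tendsto (fun n => ‖u n * x - x‖ ^ 2) l (𝓝 0) :=
    squeeze_zero (fun n => sq_nonneg _) (fun n => (norm_mul_sub_self_sq_le (hu n) hx).trans
      (by gcongr; exact hC n)) hch
  rw [tendsto_iff_norm_sub_tendsto_zero]
  simpa using hsq.sqrt

lemma norm_cfcₙ_cutoff_succ_mul_sub_le {h : A} (hh : 0 ≤ h) (n : ℕ) :
    ‖cfcₙ (cutoff (n + 1)) h * h - h‖ ≤ 2 * (1 / 2) ^ n := by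
  have heq : cfcₙ (cutoff (n + 1)) h * h - h = cfcₙ (fun x => cutoff (n + 1) x * x - x) h := by
    rw [cfcₙ_sub (fun x => cutoff (n + 1) x * x) (fun x => x) h,
      cfcₙ_mul (cutoff (n + 1)) (fun x => x) h, cfcₙ_id' ℝ h]
  rw [heq]
  exact norm_cfcₙ_le fun x hx =>
    abs_cutoff_succ_mul_sub_le n (quasispectrum_nonneg_of_nonneg h hh x hx)

lemma tendsto_cfcₙ_cutoff_mul {h : A} (hh : 0 ≤ h) :
    Tendsto (fun n => cfcₙ (cutoff n) h * h) atTop (𝓝 h) := by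
  rw [← tendsto_add_atTop_iff_nat 1, tendsto_iff_norm_sub_tendsto_zero]
  refine squeeze_zero (fun n => norm_nonneg _) (norm_cfcₙ_cutoff_succ_mul_sub_le hh) ?_
  simpa using (tendsto_pow_atTop_nhds_zero_of_lt_one (r := (1 / 2 : ℝ))
    (by norm_num) (by norm_num)).const_mul 2

theorem exists_monotone_isApproximateUnit {ι : Type*} [Countable ι] {v : ι → A}
    (hv : Dense (Submodule.span ℂ (⋃ k, Set.range (v k * ·)) : Set A)) :
    ∃ u : ℕ → A, u 0 = 0 ∧ Monotone u ∧ (∀ n, ‖u n‖ ≤ 1) ∧ (∀ n, u n * u (n + 1) = u n) ∧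
      (map u atTop).IsApproximateUnit := by
  obtain ⟨h, hh, hle⟩ := exists_nonneg_forall_le_smul fun k => mul_star_self_nonneg (v k)
  let u (n : ℕ) : A := cfcₙ (cutoff n) h
  have hsa (n : ℕ) : IsSelfAdjoint (u n) := cfcₙ_predicate _ _
  have hnorm (n : ℕ) : ‖u n‖ ≤ 1 := norm_cfcₙ_le fun x _ => by
    rw [Real.norm_of_nonneg (cutoff_nonneg n x)]
    exact cutoff_le_one n x
  have hgen : ∀ x ∈ ⋃ k, Set.range (v k * ·), Tendsto (fun n => u n * x) atTop (𝓝 x) := by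
    simp only [Set.mem_iUnion, Set.mem_range]
    rintro _ ⟨k, b, rfl⟩
    obtain ⟨c, hc⟩ := hle k
    simpa only [mul_assoc] using
      (tendsto_mul_of_mul_star_le_smul hsa hnorm (tendsto_cfcₙ_cutoff_mul hh) hc).mul_const b
  have hright : ∀ x, Tendsto (· * x) (map u atTop) (𝓝 x) := fun x =>
    tendsto_map'_iff.mpr (tendsto_mul_of_dense_span (C := 1) hnorm hv hgen x)
  refine ⟨u, ?_, monotone_nat_of_le_succ fun n => ?_, hnorm, fun n => ?_, ?_, hright⟩
  · simp only [u, cutoff_zero]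
    exact cfcₙ_zero ℝ h
  · exact cfcₙ_mono fun x _ => cutoff_le_cutoff_succ n x
  · simp only [u]
    rw [← cfcₙ_mul (cutoff n) (cutoff (n + 1)) h]
    simp only [cutoff_mul_cutoff_succ]
  · exact (CStarAlgebra.tendsto_mul_left_iff_tendsto_mul_right
      (eventually_map.mpr (.of_forall hsa))).mpr hright

end ApproximateUnit

section SquareRootSums

lemma sqrt_mul_sqrt_eq_zero {p q : A} (hp : 0 ≤ p) (hq : 0 ≤ q) (hpq : p * q = 0) :
    CFC.sqrt p * CFC.sqrt q = 0 := by
  have hsp : IsSelfAdjoint (CFC.sqrt p) := .of_nonneg (CFC.sqrt_nonneg p)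
  have hsq : IsSelfAdjoint (CFC.sqrt q) := .of_nonneg (CFC.sqrt_nonneg q)
  have left_sqrt : CFC.sqrt p * q = 0 :=
    mul_eq_zero_of_mul_self_mul_eq_zero hsp (by rw [CFC.sqrt_mul_sqrt_self p, hpq])
  have swapped : CFC.sqrt q * CFC.sqrt p = 0 := by
    refine mul_eq_zero_of_mul_self_mul_eq_zero hsq ?_
    rw [CFC.sqrt_mul_sqrt_self q]
    simpa [hsp.star_eq, (IsSelfAdjoint.of_nonneg hq).star_eq] using congrArg star left_sqrt
  simpa [hsp.star_eq, hsq.star_eq] using congrArg star swapped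

lemma smul_sqrt_mul_star_le {η : ℂ} (hη : ‖η‖ ≤ 1) {p : A} (hp : 0 ≤ p) :
    (η • CFC.sqrt p) * star (η • CFC.sqrt p) ≤ p := by
  have hsa : IsSelfAdjoint (CFC.sqrt p) := .of_nonneg (CFC.sqrt_nonneg p)
  calc (η • CFC.sqrt p) * star (η • CFC.sqrt p) = (‖η‖ ^ 2 : ℝ) • p := by
        rw [star_smul, hsa.star_eq, smul_mul_smul_comm, CFC.sqrt_mul_sqrt_self p,
          Complex.star_def, Complex.mul_conj', ← Complex.ofReal_pow, Complex.coe_smul]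
    _ ≤ p := smul_le_of_le_one_left hp (pow_le_one₀ (norm_nonneg η) hη)

lemma norm_mul_sq_le_of_mul_star_le {S d : A} (h : S * star S ≤ d) (a : A) :
    ‖a * S‖ ^ 2 ≤ ‖a * d‖ * ‖a‖ := by
  have hconj : (a * S) * star (a * S) ≤ a * d * star a := by
    simpa only [star_mul, mul_assoc] using star_right_conjugate_le_conjugate h a
  calc ‖a * S‖ ^ 2 = ‖(a * S) * star (a * S)‖ := by rw [CStarRing.norm_self_mul_star, sq]
    _ ≤ ‖a * d * star a‖ :=
        CStarAlgebra.norm_le_norm_of_nonneg_of_le (mul_star_self_nonneg _) hconj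
    _ ≤ ‖a * d‖ * ‖a‖ := (norm_mul_le _ _).trans_eq (by rw [norm_star])

variable {u : ℕ → A} {η : ℕ → ℂ} {n m : ℕ}

lemma sum_smul_sqrt_sub_mul_star_le (hmono : Monotone u) (hu : ∀ n, u n * u (n + 1) = u n)
    (hη : ∀ i, ‖η i‖ ≤ 1) (hnm : n ≤ m) :
    (∑ i ∈ Finset.Icc (n + 1) m, η i • CFC.sqrt (u i - u (i - 1))) *
        star (∑ i ∈ Finset.Icc (n + 1) m, η i • CFC.sqrt (u i - u (i - 1))) ≤
      2 • (u m - u n) := by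
  have hd (i : ℕ) : 0 ≤ u i - u (i - 1) := sub_nonneg.mpr (hmono (Nat.sub_le i 1))
  rw [← sum_Icc_sub_pred u hnm]
  refine (sum_mul_star_sum_le _ fun i j hij => ?_).trans
    (nsmul_le_nsmul_right (Finset.sum_le_sum fun i _ => smul_sqrt_mul_star_le (hη i) (hd i)) 2)
  have hsa : IsSelfAdjoint (CFC.sqrt (u j - u (j - 1))) := .of_nonneg (CFC.sqrt_nonneg _)
  rw [star_smul, hsa.star_eq, smul_mul_smul_comm,
    sqrt_mul_sqrt_eq_zero (hd i) (hd j) (sub_mul_sub_eq_zero hu hij), smul_zero]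

lemma norm_sum_smul_sqrt_sub_le (hpos : 0 ≤ u n) (hnorm : ‖u m‖ ≤ 1) (hmono : Monotone u)
    (hu : ∀ n, u n * u (n + 1) = u n) (hη : ∀ i, ‖η i‖ ≤ 1) (hnm : n ≤ m) :
    ‖∑ i ∈ Finset.Icc (n + 1) m, η i • CFC.sqrt (u i - u (i - 1))‖ ≤ √2 := by
  have hS := sum_smul_sqrt_sub_mul_star_le hmono hu hη hnm
  set S := ∑ i ∈ Finset.Icc (n + 1) m, η i • CFC.sqrt (u i - u (i - 1))
  have hle : S * star S ≤ 2 • u m := hS.trans (nsmul_le_nsmul_right (sub_le_self _ hpos) 2)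
  refine Real.le_sqrt_of_sq_le ?_
  calc ‖S‖ ^ 2 = ‖S * star S‖ := by rw [CStarRing.norm_self_mul_star, sq]
    _ ≤ ‖2 • u m‖ := CStarAlgebra.norm_le_norm_of_nonneg_of_le (mul_star_self_nonneg S) hle
    _ ≤ 2 * ‖u m‖ := by simpa using norm_nsmul_le (n := 2) (a := u m)
    _ ≤ 2 := by linarith

lemma norm_mul_sum_smul_sqrt_sub_sq_le (hmono : Monotone u) (hu : ∀ n, u n * u (n + 1) = u n)
    (hη : ∀ i, ‖η i‖ ≤ 1) (hnm : n ≤ m) (a : A) :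
    ‖a * ∑ i ∈ Finset.Icc (n + 1) m, η i • CFC.sqrt (u i - u (i - 1))‖ ^ 2 ≤
      2 * (‖a * u m - a‖ + ‖a * u n - a‖) * ‖a‖ := by
  have hS := sum_smul_sqrt_sub_mul_star_le hmono hu hη hnm
  refine (norm_mul_sq_le_of_mul_star_le hS a).trans ?_
  gcongr
  calc ‖a * 2 • (u m - u n)‖ = ‖2 • ((a * u m - a) - (a * u n - a))‖ := by
        rw [mul_smul_comm, mul_sub, sub_sub_sub_cancel_right]
    _ ≤ 2 * ‖(a * u m - a) - (a * u n - a)‖ := by simpa using norm_nsmul_le (n := 2)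
    _ ≤ 2 * (‖a * u m - a‖ + ‖a * u n - a‖) := by gcongr; exact norm_sub_le _ _

end SquareRootSums

end CStarAlgebra

theorem stmt1_general {ι A : Type*} [Countable ι] [NonUnitalCStarAlgebra A] [PartialOrder A]
    [StarOrderedRing A] (v : ι → A)
    (hv : Dense (Submodule.span ℂ (⋃ k, Set.range (v k * ·)) : Set A)) :
    ∃ u : ℕ → A, u 0 = 0 ∧ (∀ n, 0 ≤ u n) ∧ (∀ n, u n ≤ u (n + 1)) ∧ (∀ n, ‖u n‖ ≤ 1) ∧
      (∀ a : A, Tendsto (fun n => ‖a * u n - a‖) atTop (𝓝 0)) ∧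
      (∀ a : A, Tendsto (fun n => ‖u n * a - a‖) atTop (𝓝 0)) ∧
      (∀ (a : A) (η : ℕ → ℂ), (∀ i, ‖η i‖ ≤ 1) → ∀ (n m : ℕ) (hnm : n ≤ m),
        ‖∑ i ∈ Finset.Icc (n + 1) m, η i • CFC.sqrt (u i - u (i - 1))‖ ≤ √2 ∧
        ‖a * ∑ i ∈ Finset.Icc (n + 1) m, η i • CFC.sqrt (u i - u (i - 1))‖ ≤ √2 * ‖a‖ ∧
        ‖a * ∑ i ∈ Finset.Icc (n + 1) m, η i • CFC.sqrt (u i - u (i - 1))‖ ^ 2 ≤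
          4 * ((Finset.Icc n m).sup' (Finset.nonempty_Icc.mpr hnm) fun i => ‖a * u i - a‖) *
            ‖a‖) := by
  obtain ⟨u, hu0, hmono, hnorm, hu, happrox⟩ := exists_monotone_isApproximateUnit hv
  have hpos (n : ℕ) : 0 ≤ u n := hu0 ▸ hmono n.zero_le
  refine ⟨u, hu0, hpos, fun n => hmono n.le_succ, hnorm,
    fun a => tendsto_iff_norm_sub_tendsto_zero.mp (happrox.tendsto_mul_left a),
    fun a => tendsto_iff_norm_sub_tendsto_zero.mp (happrox.tendsto_mul_right a),
    fun a η hη n m hnm => ?_⟩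
  have hS := norm_sum_smul_sqrt_sub_le (hpos n) (hnorm m) hmono hu hη hnm
  refine ⟨hS, ?_, (norm_mul_sum_smul_sqrt_sub_sq_le hmono hu hη hnm a).trans ?_⟩
  · rw [mul_comm (√2)]
    exact norm_mul_le_of_le le_rfl hS
  · have hn := Finset.le_sup' (fun i => ‖a * u i - a‖) (Finset.left_mem_Icc.mpr hnm)
    have hm := Finset.le_sup' (fun i => ‖a * u i - a‖) (Finset.right_mem_Icc.mpr hnm)
    exact mul_le_mul_of_nonneg_right (by linarith) (norm_nonneg a)

/-- Every C*-algebra with a countable left approximate identity possesses a countable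
increasing approximate identity `(uₙ)` bounded by one (with `u₀ = 0`) satisfying, for any
`a ∈ A`, any unimodular scalars `(ηᵢ)` and any integers `m > n ≥ 0`:
(1) `‖∑_{i=n+1}^m ηᵢ √(uᵢ − uᵢ₋₁)‖ ≤ 4`;
(2) `‖a ∑_{i=n+1}^m ηᵢ √(uᵢ − uᵢ₋₁)‖ ≤ 4‖a‖`;
(3) `‖a ∑_{i=n+1}^m ηᵢ √(uᵢ − uᵢ₋₁)‖² ≤ 10 max_{n≤i≤m} ‖a uᵢ − a‖ ‖a‖ + 2^{1−2n} ‖a‖²`. -/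
theorem stmt1 {A : Type*} [NonUnitalCStarAlgebra A] [PartialOrder A] [StarOrderedRing A]
    (v : ℕ → A) (hv : ∀ a : A, Tendsto (fun k => ‖v k * a - a‖) atTop (nhds 0)) :
    ∃ u : ℕ → A, u 0 = 0 ∧ (∀ n, 0 ≤ u n) ∧ (∀ n, u n ≤ u (n + 1)) ∧ (∀ n, ‖u n‖ ≤ 1) ∧
      (∀ a : A, Tendsto (fun n => ‖a * u n - a‖) atTop (nhds 0)) ∧
      (∀ a : A, Tendsto (fun n => ‖u n * a - a‖) atTop (nhds 0)) ∧
      (∀ (a : A) (η : ℕ → ℂ), (∀ i, ‖η i‖ = 1) → ∀ (n m : ℕ) (hnm : n < m),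
        ‖∑ i ∈ Finset.Icc (n + 1) m, η i • CFC.sqrt (u i - u (i - 1))‖ ≤ 4 ∧
        ‖a * ∑ i ∈ Finset.Icc (n + 1) m, η i • CFC.sqrt (u i - u (i - 1))‖ ≤ 4 * ‖a‖ ∧
        ‖a * ∑ i ∈ Finset.Icc (n + 1) m, η i • CFC.sqrt (u i - u (i - 1))‖ ^ 2 ≤
          10 * ((Finset.Icc n m).sup' (Finset.nonempty_Icc.mpr hnm.le)
              fun i => ‖a * u i - a‖) * ‖a‖ +
            (2 : ℝ) ^ ((1 : ℤ) - 2 * (n : ℤ)) * ‖a‖ ^ 2) := by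
  have hsqrt : √2 ≤ 4 := by linarith [Real.sqrt_two_lt_three_halves]
  obtain ⟨u, hu0, hpos, hmono, hnorm, hleft, hright, hu⟩ :=
    stmt1_general v (dense_span_iUnion_range_mul_of_tendsto hv)
  refine ⟨u, hu0, hpos, hmono, hnorm, hleft, hright, fun a η hη n m hnm => ?_⟩
  refine (hu a η (fun i => (hη i).le) n m hnm.le).imp (·.trans hsqrt)
    (.imp (·.trans (by gcongr)) fun h => ?_)
  linarith [(sq_nonneg _).trans h, show 0 ≤ (2 : ℝ) ^ ((1 : ℤ) - 2 * n) * ‖a‖ ^ 2 by positivity]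
end

section
/- Let Ω be a locally compact Hausdorff space satisfying the Suslin condition. Then the following conditions are equivalent: (a) Ω is paracompact; (b) Ω is σ-compact; (c) Ω is a Lindelöf space (every open cover of Ω has a countable subcover); (d) C₀(Ω, ℂ) contains a strictly positive element, i.e. a function f ∈ C₀(Ω, ℂ) taking real values with f(t) > 0 for every t ∈ Ω; (e) C₀(Ω, ℂ) has a sequential approximate identity bounded by one, i.e. a sequence (e_n) in C₀(Ω, ℂ) with ‖e_n‖ ≤ 1 for all n and ‖g·e_n − g‖ → 0 for every g ∈ C₀(Ω, ℂ). -/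
open ZeroAtInfty Filter

/-!
Under the Suslin condition a locally finite family of nonempty open sets is countable: take a
maximal disjoint family of open sets each meeting only finitely many members; it is countable, and
its union is dense, so it meets every member. Hence a paracompact space with this property is
Lindelöf, and a locally compact Lindelöf space is σ-compact.

The support of a function vanishing at infinity is σ-compact, so a strictly positive function forces
σ-compactness, and so does a sequential approximate identity, whose members cannot all vanish at a
point. Conversely, Urysohn functions equal to `1` on the terms of a compact exhaustion form an
approximate identity, and a weighted sum of them is strictly positive.
-/

open Set Topology

/-- The Suslin condition (also called the countable chain condition): every family of nonempty,
pairwise disjoint open sets is countable. -/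
def SuslinCondition (X : Type*) [TopologicalSpace X] : Prop :=
  ∀ S : Set (Set X), (∀ U ∈ S, IsOpen U ∧ U.Nonempty) → S.PairwiseDisjoint id → S.Countable

section Suslin

variable {X : Type*} [TopologicalSpace X]

theorem exists_pairwiseDisjoint_dense_sUnion {𝓑 : Set (Set X)}
    (h𝓑 : ∀ U : Set X, IsOpen U → U.Nonempty → ∃ V ∈ 𝓑, V.Nonempty ∧ V ⊆ U) :
    ∃ M ⊆ 𝓑, M.PairwiseDisjoint id ∧ Dense (⋃₀ M) := by
  obtain ⟨M, hM⟩ := zorn_subset {S | S ⊆ 𝓑 ∧ S.PairwiseDisjoint id} fun c hc hchain =>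
    ⟨⋃₀ c, ⟨sUnion_subset fun S hS => (hc hS).1,
      (pairwiseDisjoint_sUnion hchain.directedOn).2 fun S hS => (hc hS).2⟩,
      fun _ => subset_sUnion_of_mem⟩
  refine ⟨M, hM.prop.1, hM.prop.2, dense_iff_inter_open.2 fun U hU hUne => ?_⟩
  obtain ⟨V, hV𝓑, hVne, hVU⟩ := h𝓑 U hU hUne
  by_contra hdisj
  have hVM : Disjoint V (⋃₀ M) :=
    (disjoint_iff_inter_eq_empty.2 (not_nonempty_iff_eq_empty.1 hdisj)).mono_left hVU
  have hV : V ∈ M := hM.le_of_ge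
    ⟨insert_subset hV𝓑 hM.prop.1,
      hM.prop.2.insert fun W hW _ => hVM.mono_right (subset_sUnion_of_mem hW)⟩
    (subset_insert V M) (mem_insert V M)
  exact hVne.ne_empty (disjoint_self.1 (hVM.mono_right (subset_sUnion_of_mem hV)))

theorem SuslinCondition.countable_of_locallyFinite (hX : SuslinCondition X) {ι : Type*}
    {V : ι → Set X} (hVo : ∀ i, IsOpen (V i)) (hV : LocallyFinite V) :
    {i | (V i).Nonempty}.Countable := by
  obtain ⟨M, hM, hMdisj, hMdense⟩ := exists_pairwiseDisjoint_dense_sUnion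
    (𝓑 := {W | IsOpen W ∧ W.Nonempty ∧ {i | (V i ∩ W).Nonempty}.Finite}) (by
      rintro U hU ⟨x, hxU⟩
      obtain ⟨t, ht, htfin⟩ := hV x
      have hx : x ∈ U ∩ interior t := ⟨hxU, mem_interior_iff_mem_nhds.2 ht⟩
      refine ⟨U ∩ interior t, ⟨hU.inter isOpen_interior, ⟨x, hx⟩, htfin.subset ?_⟩, ⟨x, hx⟩,
        inter_subset_left⟩
      exact fun i hi => hi.mono (inter_subset_inter_right _
        (inter_subset_right.trans interior_subset)))
  have hMcount : M.Countable := hX M (fun W hW => ⟨(hM hW).1, (hM hW).2.1⟩) hMdisj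
  refine (hMcount.biUnion fun W hW => (hM hW).2.2.countable).mono fun i hi => ?_
  obtain ⟨x, hxV, W, hW, hxW⟩ := hMdense.inter_open_nonempty (V i) (hVo i) hi
  exact mem_biUnion hW ⟨x, hxV, hxW⟩

theorem SuslinCondition.lindelofSpace [ParacompactSpace X] (hX : SuslinCondition X) :
    LindelofSpace X := by
  refine ⟨isLindelof_of_countable_subcover fun U hUo hU => ?_⟩
  obtain ⟨V, hVo, hVcover, hVfin, hVU⟩ := precise_refinement U hUo (univ_subset_iff.1 hU)
  refine ⟨{i | (V i).Nonempty}, hX.countable_of_locallyFinite hVo hVfin, fun x _ => ?_⟩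
  obtain ⟨i, hi⟩ := iUnion_eq_univ_iff.1 hVcover x
  exact mem_biUnion (show i ∈ {i | (V i).Nonempty} from ⟨x, hi⟩) (hVU i hi)

theorem sigmaCompactSpace_of_lindelofSpace [WeaklyLocallyCompactSpace X] [LindelofSpace X] :
    SigmaCompactSpace X := by
  choose K hK hKnhds using fun x : X => exists_compact_mem_nhds x
  obtain ⟨t, ht, htK⟩ := LindelofSpace.elim_nhds_subcover K hKnhds
  rw [← isSigmaCompact_univ_iff, ← htK]
  exact isSigmaCompact_biUnion ht fun x _ => (hK x).isSigmaCompact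

end Suslin

section ZeroAtInfty

variable {X : Type*} [TopologicalSpace X]

theorem zeroAtInfty_norm_le_iff {E : Type*} [SeminormedAddCommGroup E] {f : C₀(X, E)} {C : ℝ}
    (hC : 0 ≤ C) : ‖f‖ ≤ C ↔ ∀ x, ‖f x‖ ≤ C :=
  BoundedContinuousFunction.norm_le hC

theorem continuous_zeroAtInfty_eval {E : Type*} [PseudoMetricSpace E] [Zero E] (x : X) :
    Continuous fun f : C₀(X, E) => f x :=
  continuous_iff_continuousAt.2 fun _ =>
    (ZeroAtInftyContinuousMap.tendsto_iff_tendstoUniformly.1 tendsto_id).tendsto_at x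

theorem hasSum_zeroAtInfty_apply {E ι : Type*} [SeminormedAddCommGroup E] {f : ι → C₀(X, E)}
    {g : C₀(X, E)} (h : HasSum f g) (x : X) : HasSum (fun i => f i x) (g x) :=
  h.map (⟨⟨fun f => f x, rfl⟩, fun _ _ => rfl⟩ : C₀(X, E) →+ E) (continuous_zeroAtInfty_eval x)

theorem isCompact_setOf_le_norm_zeroAtInfty {E : Type*} [SeminormedAddCommGroup E] (f : C₀(X, E))
    {ε : ℝ} (hε : 0 < ε) : IsCompact {x | ε ≤ ‖f x‖} := by
  have hsmall : ∀ᶠ x in cocompact X, ‖f x‖ < ε :=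
    (zero_at_infty f).norm.eventually_lt_const (by rwa [norm_zero])
  obtain ⟨K, hK, hKf⟩ := mem_cocompact.1 hsmall
  refine hK.of_isClosed_subset (isClosed_le continuous_const (map_continuous f).norm) ?_
  intro x (hx : ε ≤ ‖f x‖)
  by_contra hxK
  have hlt : ‖f x‖ < ε := hKf hxK
  exact hlt.not_ge hx

theorem isSigmaCompact_support_zeroAtInfty {E : Type*} [NormedAddCommGroup E] (f : C₀(X, E)) :
    IsSigmaCompact (Function.support f) := by
  have hsupport : Function.support f = ⋃ n : ℕ, {x | 1 / ((n : ℝ) + 1) ≤ ‖f x‖} := by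
    ext x
    simp only [Function.mem_support, mem_iUnion, mem_ofPred_eq, ← norm_pos_iff]
    exact ⟨fun hx => (exists_nat_one_div_lt hx).imp fun _ => le_of_lt,
      fun ⟨_, hn⟩ => Nat.one_div_pos_of_nat.trans_le hn⟩
  rw [hsupport]
  exact isSigmaCompact_iUnion_of_isCompact _ fun n =>
    isCompact_setOf_le_norm_zeroAtInfty f Nat.one_div_pos_of_nat

theorem sigmaCompactSpace_of_forall_exists_zeroAtInfty_ne_zero {E ι : Type*}
    [NormedAddCommGroup E] [Countable ι] (e : ι → C₀(X, E)) (he : ∀ x, ∃ i, e i x ≠ 0) :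
    SigmaCompactSpace X := by
  rw [← isSigmaCompact_univ_iff, ← iUnion_eq_univ_iff.2 he]
  exact isSigmaCompact_iUnion _ fun i => isSigmaCompact_support_zeroAtInfty (e i)

theorem tendsto_mul_of_eventually_eqOn_one {R ι : Type*} [SeminormedRing R] {l : Filter ι}
    {e : ι → C₀(X, R)} {C : ℝ} (hC : ∀ i, ‖e i‖ ≤ C)
    (he : ∀ K, IsCompact K → ∀ᶠ i in l, EqOn (e i) 1 K) (g : C₀(X, R)) :
    Tendsto (fun i => g * e i) l (𝓝 g) := by
  rw [ZeroAtInftyContinuousMap.tendsto_iff_tendstoUniformly, Metric.tendstoUniformly_iff]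
  intro ε hε
  have hsmall : ∀ᶠ x in cocompact X, ‖g x‖ * (‖(1 : R)‖ + C) < ε :=
    ((zero_at_infty g).norm.mul_const _).eventually_lt_const (by rwa [norm_zero, zero_mul])
  obtain ⟨K, hK, hKg⟩ := mem_cocompact.1 hsmall
  filter_upwards [he K hK] with i hi x
  rw [dist_eq_norm, ZeroAtInftyContinuousMap.mul_apply]
  by_cases hx : x ∈ K
  · simpa [hi hx] using hε
  · have hex : ‖e i x‖ ≤ C := (zeroAtInfty_norm_le_iff ((norm_nonneg _).trans (hC i))).1 (hC i) x
    calc ‖g x - g x * e i x‖ = ‖g x * (1 - e i x)‖ := by rw [mul_sub, mul_one]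
      _ ≤ ‖g x‖ * ‖1 - e i x‖ := norm_mul_le _ _
      _ ≤ ‖g x‖ * (‖(1 : R)‖ + C) := by gcongr; exact (norm_sub_le _ _).trans (by gcongr)
      _ < ε := hKg hx

theorem exists_zeroAtInfty_forall_pos {ι : Type*} [Countable ι] {e : ι → C₀(X, ℝ)}
    (hnonneg : ∀ i x, 0 ≤ e i x) (hpos : ∀ x, ∃ i, 0 < e i x) :
    ∃ f : C₀(X, ℝ), ∀ x, 0 < f x := by
  obtain ⟨w, hw, c, hwc, -⟩ := NNReal.exists_pos_sum_of_countable one_ne_zero ι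
  have ha : ∀ i, 0 < (w i : ℝ) / (1 + ‖e i‖) := fun i =>
    div_pos (NNReal.coe_pos.2 (hw i)) (by positivity)
  have hsummable : Summable fun i => ((w i : ℝ) / (1 + ‖e i‖)) • e i := by
    refine (NNReal.summable_coe.2 hwc.summable).of_norm_bounded fun i => ?_
    rw [norm_smul, Real.norm_of_nonneg (ha i).le, div_mul_eq_mul_div, div_le_iff₀ (by positivity)]
    gcongr
    linarith
  refine ⟨∑' i, ((w i : ℝ) / (1 + ‖e i‖)) • e i, fun x => ?_⟩
  have hsum := hasSum_zeroAtInfty_apply hsummable.hasSum x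
  obtain ⟨i, hi⟩ := hpos x
  rw [← hsum.tsum_eq]
  exact hsum.summable.tsum_pos (fun j => mul_nonneg (ha j).le (hnonneg j x)) i (mul_pos (ha i) hi)

/-- A real-valued function vanishing at infinity, regarded as taking values in `𝕜 = ℝ` or `ℂ`. It
carries the Urysohn functions, which are real-valued, over to `C₀(X, 𝕜)`. -/
def zeroAtInftyOfReal (𝕜 : Type*) [RCLike 𝕜] (f : C₀(X, ℝ)) : C₀(X, 𝕜) where
  toFun x := (f x : 𝕜)
  continuous_toFun := RCLike.continuous_ofReal.comp (map_continuous f)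
  zero_at_infty' := by
    simpa only [Function.comp_def, RCLike.ofReal_zero] using
      (RCLike.continuous_ofReal.tendsto (0 : ℝ)).comp (zero_at_infty f)

theorem zeroAtInftyOfReal_apply {𝕜 : Type*} [RCLike 𝕜] (f : C₀(X, ℝ)) (x : X) :
    zeroAtInftyOfReal 𝕜 f x = (f x : 𝕜) :=
  rfl

end ZeroAtInfty

section LocallyCompact

variable {X : Type*} [TopologicalSpace X] [WeaklyLocallyCompactSpace X] [R1Space X]

theorem exists_zeroAtInfty_eqOn_one_of_isCompact {K : Set X} (hK : IsCompact K) :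
    ∃ f : C₀(X, ℝ), EqOn f 1 K ∧ ∀ x, f x ∈ Icc 0 1 := by
  obtain ⟨f, hf, -, hsupp, hf01⟩ :=
    exists_continuous_one_zero_of_isCompact hK isClosed_empty (disjoint_empty K)
  exact ⟨⟨f, hsupp.is_zero_at_infty⟩, hf, hf01⟩

theorem exists_seq_zeroAtInfty_eventually_eqOn_one [SigmaCompactSpace X] :
    ∃ e : ℕ → C₀(X, ℝ), (∀ n x, e n x ∈ Icc 0 1) ∧
      ∀ K, IsCompact K → ∀ᶠ n in atTop, EqOn (e n) 1 K := by
  let Q := CompactExhaustion.choice X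
  choose e heq h01 using fun n => exists_zeroAtInfty_eqOn_one_of_isCompact (Q.isCompact n)
  refine ⟨e, h01, fun K hK => ?_⟩
  obtain ⟨N, hN⟩ := Q.exists_superset_of_isCompact hK
  filter_upwards [eventually_ge_atTop N] with n hn
  exact (heq n).mono (hN.trans (Q.subset hn))

theorem exists_apply_ne_zero_of_tendsto_mul {𝕜 ι : Type*} [RCLike 𝕜] {l : Filter ι} [l.NeBot]
    {e : ι → C₀(X, 𝕜)} (he : ∀ g : C₀(X, 𝕜), Tendsto (fun i => g * e i) l (𝓝 g)) (x : X) :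
    ∃ i, e i x ≠ 0 := by
  by_contra! hzero
  obtain ⟨f, hf, -⟩ := exists_zeroAtInfty_eqOn_one_of_isCompact (isCompact_singleton (x := x))
  have hfx : zeroAtInftyOfReal 𝕜 f x = 1 := by
    rw [zeroAtInftyOfReal_apply, hf rfl, Pi.one_apply, RCLike.ofReal_one]
  have hlim : Tendsto (fun i => (zeroAtInftyOfReal 𝕜 f * e i) x) l (𝓝 (zeroAtInftyOfReal 𝕜 f x)) :=
    ((continuous_zeroAtInfty_eval x).tendsto _).comp (he _)
  simp only [ZeroAtInftyContinuousMap.mul_apply, hzero, mul_zero, hfx] at hlim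
  exact zero_ne_one (tendsto_nhds_unique tendsto_const_nhds hlim)

theorem sigmaCompactSpace_iff_exists_zeroAtInfty_pos (𝕜 : Type*) [RCLike 𝕜] :
    SigmaCompactSpace X ↔
      ∃ f : C₀(X, 𝕜), (∀ x, RCLike.im (f x) = 0) ∧ ∀ x, 0 < RCLike.re (f x) := by
  constructor
  · intro _
    obtain ⟨e, h01, hone⟩ := exists_seq_zeroAtInfty_eventually_eqOn_one (X := X)
    obtain ⟨f, hf⟩ := exists_zeroAtInfty_forall_pos (fun n x => (h01 n x).1) fun x => by
      obtain ⟨n, hn⟩ := (hone {x} isCompact_singleton).exists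
      exact ⟨n, by rw [hn rfl]; exact one_pos⟩
    refine ⟨zeroAtInftyOfReal 𝕜 f, fun x => RCLike.ofReal_im _, fun x => ?_⟩
    rw [zeroAtInftyOfReal_apply, RCLike.ofReal_re]
    exact hf x
  · rintro ⟨f, -, hf⟩
    refine sigmaCompactSpace_of_forall_exists_zeroAtInfty_ne_zero (fun _ : Unit => f) fun x =>
      ⟨(), fun hx => (hf x).ne' ?_⟩
    rw [hx, map_zero]

theorem sigmaCompactSpace_iff_exists_seq_approximateIdentity (𝕜 : Type*) [RCLike 𝕜] :
    SigmaCompactSpace X ↔ ∃ e : ℕ → C₀(X, 𝕜), (∀ n, ‖e n‖ ≤ 1) ∧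
      ∀ g : C₀(X, 𝕜), Tendsto (fun n => ‖g * e n - g‖) atTop (𝓝 0) := by
  simp only [← tendsto_iff_norm_sub_tendsto_zero]
  constructor
  · intro _
    obtain ⟨e, h01, hone⟩ := exists_seq_zeroAtInfty_eventually_eqOn_one (X := X)
    have hnorm : ∀ n, ‖zeroAtInftyOfReal 𝕜 (e n)‖ ≤ 1 := fun n =>
      (zeroAtInfty_norm_le_iff zero_le_one).2 fun x => by
        rw [zeroAtInftyOfReal_apply, RCLike.norm_of_nonneg (h01 n x).1]
        exact (h01 n x).2
    refine ⟨fun n => zeroAtInftyOfReal 𝕜 (e n), hnorm,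
      tendsto_mul_of_eventually_eqOn_one hnorm fun K hK => ?_⟩
    filter_upwards [hone K hK] with n hn x hx
    rw [zeroAtInftyOfReal_apply, hn hx, Pi.one_apply, Pi.one_apply, RCLike.ofReal_one]
  · rintro ⟨e, -, he⟩
    exact sigmaCompactSpace_of_forall_exists_zeroAtInfty_ne_zero e
      (exists_apply_ne_zero_of_tendsto_mul he)

end LocallyCompact

theorem stmt2_general {Ω : Type*} [TopologicalSpace Ω] [LocallyCompactSpace Ω] [T2Space Ω]
    (𝕜 : Type*) [RCLike 𝕜] (hSuslin : SuslinCondition Ω) :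
    List.TFAE [ParacompactSpace Ω,
      SigmaCompactSpace Ω,
      LindelofSpace Ω,
      ∃ f : C₀(Ω, 𝕜), (∀ t, RCLike.im (f t) = 0) ∧ ∀ t, 0 < RCLike.re (f t),
      ∃ e : ℕ → C₀(Ω, 𝕜), (∀ n, ‖e n‖ ≤ 1) ∧
        ∀ g : C₀(Ω, 𝕜), Tendsto (fun n => ‖g * e n - g‖) atTop (𝓝 0)] := by
  tfae_have 1 → 3 := fun _ => hSuslin.lindelofSpace
  tfae_have 3 → 2 := fun _ => sigmaCompactSpace_of_lindelofSpace
  tfae_have 2 → 1 := fun _ => inferInstance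
  tfae_have 2 ↔ 4 := sigmaCompactSpace_iff_exists_zeroAtInfty_pos 𝕜
  tfae_have 2 ↔ 5 := sigmaCompactSpace_iff_exists_seq_approximateIdentity 𝕜
  tfae_finish

/-- For a locally compact Hausdorff space `Ω` satisfying the Suslin condition, the following
are equivalent: `Ω` is paracompact; `Ω` is σ-compact; `Ω` is Lindelöf; `C₀(Ω, ℂ)` contains a
strictly positive (real-valued) function; `C₀(Ω, ℂ)` has a sequential approximate identity
bounded by one. -/
theorem stmt2 {Ω : Type*} [TopologicalSpace Ω] [LocallyCompactSpace Ω] [T2Space Ω]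
    (hSuslin : ∀ S : Set (Set Ω), (∀ U ∈ S, IsOpen U ∧ U.Nonempty) →
      S.PairwiseDisjoint id → S.Countable) :
    List.TFAE [ParacompactSpace Ω,
      SigmaCompactSpace Ω,
      LindelofSpace Ω,
      ∃ f : C₀(Ω, ℂ), (∀ t, (f t).im = 0) ∧ ∀ t, 0 < (f t).re,
      ∃ e : ℕ → C₀(Ω, ℂ), (∀ n, ‖e n‖ ≤ 1) ∧
        ∀ g : C₀(Ω, ℂ), Tendsto (fun n => ‖g * e n - g‖) atTop (nhds 0)] :=
  stmt2_general ℂ hSuslin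
end

section
/- Let Ω be a separable locally compact Hausdorff space. Then there exist a separable complex Hilbert space H and an isometric star-algebra homomorphism from C₀(Ω, ℂ) into B(H), the C*-algebra of bounded linear operators on H. -/
open ZeroAtInfty

/-!
A bounded family `a : ι → 𝕜` acts on `ℓ²(ι, 𝕜)` as a diagonal operator. This is a star-algebra
homomorphism, and it is isometric because the basis vectors are eigenvectors with eigenvalues `a i`.
A function in `C₀(Ω, 𝕜)` is determined, together with its norm, by its values on a dense family
`s : ι → Ω`, so `f ↦ diag (f (s i))` is an isometric representation on `ℓ²(ι, 𝕜)`. A separable `Ω`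
has a countable such family, and then `ℓ²(ι, 𝕜)` is separable.
-/

open TopologicalSpace
open scoped lp ENNReal

section Diagonal

variable {ι 𝕜 : Type*} [NontriviallyNormedField 𝕜]

/-- The diagonal operator `x ↦ (a i * x i)ᵢ` on `ℓ^p(ι, 𝕜)` with bounded diagonal `a`. -/
noncomputable def diagonalCLM (p : ℝ≥0∞) [Fact (1 ≤ p)] (a : ℓ^∞(ι, 𝕜)) :
    ℓ^p(ι, 𝕜) →L[𝕜] ℓ^p(ι, 𝕜) :=
  lp.mapCLM p (fun i ↦ ContinuousLinearMap.mul 𝕜 𝕜 (a i)) (norm_nonneg a) fun i ↦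
    (ContinuousLinearMap.opNorm_mul_apply_le 𝕜 𝕜 (a i)).trans
      (lp.norm_apply_le_norm ENNReal.top_ne_zero a i)

@[simp]
theorem diagonalCLM_apply (p : ℝ≥0∞) [Fact (1 ≤ p)] (a : ℓ^∞(ι, 𝕜)) (x : ℓ^p(ι, 𝕜)) (i : ι) :
    diagonalCLM p a x i = a i * x i :=
  rfl

theorem diagonalCLM_single [DecidableEq ι] (p : ℝ≥0∞) [Fact (1 ≤ p)] (a : ℓ^∞(ι, 𝕜)) (i : ι)
    (c : 𝕜) : diagonalCLM p a (lp.single (E := fun _ ↦ 𝕜) p i c) = a i • lp.single p i c := by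
  ext j
  obtain rfl | hij := eq_or_ne j i
  · simp
  · simp [hij]

theorem norm_diagonalCLM (p : ℝ≥0∞) [Fact (1 ≤ p)] (a : ℓ^∞(ι, 𝕜)) :
    ‖diagonalCLM p a‖ = ‖a‖ := by
  classical
  apply le_antisymm
  · exact lp.norm_mapCLM_le p _ _ _
  · refine lp.norm_le_of_forall_le (norm_nonneg _) fun i ↦ ?_
    have norm_single : ‖lp.single (E := fun _ : ι ↦ 𝕜) p i 1‖ = 1 := by
      rw [lp.norm_single (zero_lt_one.trans_le Fact.out), norm_one]
    simpa [diagonalCLM_single, norm_smul, norm_single] using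
      (diagonalCLM p a).le_opNorm (lp.single (E := fun _ ↦ 𝕜) p i 1)

end Diagonal

section DiagonalRepresentation

variable {ι 𝕜 : Type*} [RCLike 𝕜]

theorem adjoint_diagonalCLM (a : ℓ^∞(ι, 𝕜)) :
    (diagonalCLM 2 a).adjoint = diagonalCLM 2 (star a) := by
  symm
  rw [ContinuousLinearMap.eq_adjoint_iff]
  intro x y
  simp only [lp.inner_eq_tsum, diagonalCLM_apply, lp.star_apply, RCLike.inner_apply, map_mul,
    RCLike.star_def, RCLike.conj_conj, mul_assoc, mul_left_comm]

variable (ι 𝕜) in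
/-- The representation of `ℓ^∞(ι, 𝕜)` on `ℓ²(ι, 𝕜)` by diagonal operators. -/
noncomputable def diagonalStarAlgHom :
    ℓ^∞(ι, 𝕜) →⋆ₐ[𝕜] (ℓ²(ι, 𝕜) →L[𝕜] ℓ²(ι, 𝕜)) where
  toFun := diagonalCLM 2
  map_zero' := by
    ext x i
    exact zero_mul (x i)
  map_one' := by
    ext x i
    exact one_mul (x i)
  map_add' a b := by
    ext x i
    exact add_mul (a i) (b i) (x i)
  map_mul' a b := by
    ext x i
    exact mul_assoc (a i) (b i) (x i)
  commutes' _ := rfl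
  map_star' a := (adjoint_diagonalCLM a).symm

theorem norm_diagonalStarAlgHom (a : ℓ^∞(ι, 𝕜)) : ‖diagonalStarAlgHom ι 𝕜 a‖ = ‖a‖ :=
  norm_diagonalCLM 2 a

end DiagonalRepresentation

section Evaluation

variable {ι Ω A : Type*} [TopologicalSpace Ω] [NonUnitalNormedRing A] [StarRing A]
  [NormedStarGroup A] (𝕜 : Type*) [NormedRing 𝕜] [Module 𝕜 A] [IsBoundedSMul 𝕜 A]

/-- Evaluation of functions vanishing at infinity along a family of points `s`, as a star-algebra
homomorphism into the bounded families. -/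
def evalNonUnitalStarAlgHom (s : ι → Ω) : C₀(Ω, A) →⋆ₙₐ[𝕜] ℓ^∞(ι, A) where
  toFun f := ⟨f ∘ s, memℓp_infty ⟨‖f‖, Set.forall_mem_range.2 fun i ↦
    f.toBCF.norm_coe_le_norm (s i)⟩⟩
  map_zero' := rfl
  map_add' _ _ := rfl
  map_smul' _ _ := rfl
  map_mul' _ _ := rfl
  map_star' _ := rfl

theorem norm_evalNonUnitalStarAlgHom {s : ι → Ω} (hs : DenseRange s) (f : C₀(Ω, A)) :
    ‖evalNonUnitalStarAlgHom 𝕜 s f‖ = ‖f‖ := by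
  apply le_antisymm
  · exact lp.norm_le_of_forall_le (norm_nonneg f) fun i ↦ f.toBCF.norm_coe_le_norm (s i)
  · refine (BoundedContinuousFunction.norm_le (f := f.toBCF) (norm_nonneg _)).2 fun x ↦ ?_
    have isClosed_bound : IsClosed {y | ‖f y‖ ≤ ‖evalNonUnitalStarAlgHom 𝕜 s f‖} :=
      isClosed_le (map_continuous f).norm continuous_const
    exact hs.induction_on x isClosed_bound
      (lp.norm_apply_le_norm ENNReal.top_ne_zero (evalNonUnitalStarAlgHom 𝕜 s f))

end Evaluation

theorem separableSpace_of_hilbertBasis {ι 𝕜 E : Type*} [Countable ι] [RCLike 𝕜]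
    [NormedAddCommGroup E] [InnerProductSpace 𝕜 E] (b : HilbertBasis ι 𝕜 E) :
    SeparableSpace E := by
  have h : IsSeparable (closure (Submodule.span 𝕜 (Set.range b) : Set E)) :=
    (Set.countable_range b).isSeparable.span.closure
  rwa [← Submodule.topologicalClosure_coe, b.dense_span, Submodule.top_coe,
    isSeparable_univ_iff] at h

theorem exists_countable_denseRange (X : Type*) [TopologicalSpace X] [SeparableSpace X] :
    ∃ (ι : Type) (_ : Countable ι) (s : ι → X), DenseRange s := by
  obtain ⟨S, hS, hd⟩ := exists_countable_dense X
  have : Countable S := hS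
  let e : Shrink.{0} S ≃ S := (equivShrink.{0} S).symm
  exact ⟨Shrink S, e.injective.countable, Subtype.val ∘ e,
    hd.denseRange_val.comp e.surjective.denseRange continuous_subtype_val⟩

universe u in
theorem stmt5_general (𝕜 : Type u) [RCLike 𝕜] (Ω : Type*) [TopologicalSpace Ω]
    [SeparableSpace Ω] :
    ∃ (H : Type u) (_ : NormedAddCommGroup H) (_ : InnerProductSpace 𝕜 H)
      (_ : CompleteSpace H) (_ : SeparableSpace H)
      (φ : C₀(Ω, 𝕜) →⋆ₙₐ[𝕜] (H →L[𝕜] H)), ∀ f : C₀(Ω, 𝕜), ‖φ f‖ = ‖f‖ := by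
  obtain ⟨ι, _, s, hs⟩ := exists_countable_denseRange Ω
  have separable : SeparableSpace ℓ²(ι, 𝕜) :=
    separableSpace_of_hilbertBasis (default : HilbertBasis ι 𝕜 ℓ²(ι, 𝕜))
  refine ⟨ℓ²(ι, 𝕜), inferInstance, inferInstance, inferInstance, separable,
    (diagonalStarAlgHom ι 𝕜).toNonUnitalStarAlgHom.comp (evalNonUnitalStarAlgHom 𝕜 s),
    fun f ↦ ?_⟩
  exact (norm_diagonalStarAlgHom _).trans (norm_evalNonUnitalStarAlgHom 𝕜 hs f)

/-- For a separable locally compact Hausdorff space `Ω`, the C*-algebra `C₀(Ω, ℂ)` embeds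
isometrically as a star-subalgebra of `B(H)` for some separable complex Hilbert space `H`. -/
theorem stmt5 {Ω : Type*} [TopologicalSpace Ω] [LocallyCompactSpace Ω] [T2Space Ω]
    [TopologicalSpace.SeparableSpace Ω] :
    ∃ (H : Type) (_ : NormedAddCommGroup H) (_ : InnerProductSpace ℂ H)
      (_ : CompleteSpace H) (_ : TopologicalSpace.SeparableSpace H)
      (φ : C₀(Ω, ℂ) →⋆ₙₐ[ℂ] (H →L[ℂ] H)), ∀ f : C₀(Ω, ℂ), ‖φ f‖ = ‖f‖ :=
  stmt5_general ℂ Ω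
end

section
/- There exists a compact Hausdorff topological space X which is separable, hereditarily paracompact (every topological subspace of X, with the subspace topology, is paracompact), not metrizable, and such that the C*-algebra C(X, ℂ) of continuous complex-valued functions on X with the supremum norm is not a separable Banach space. (Such a space is the 'two arrows of Alexandrov' space: the set [0,1) × {0} ∪ (0,1] × {1} with the topology generated by the sets ([α,β) × {0}) ∪ ((α,β) × {1}) and ((α,β) × {0}) ∪ ((α,β] × {1}).) -/
/-!
The space is `LowerSet ℝ` with its order topology: the cuts `Iio r` and `Iic r` form the two arrows,
and `⊥` and `⊤` are their outer ends. Being a complete linear order, it is compact Hausdorff, and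
between any two non-adjacent cuts there is a cut `Iic q` with `q` in a countable dense set.

A separable linearly ordered space is hereditarily Lindelöf. Given a family of open sets, call a
point straddled if some member contains an interval with points on both sides of it. The intervals
contained in a member and with endpoints in a countable dense set cover all straddled points. For
each covered point `y` that is a limit from the left choose `g y < y` with `(g y, y]` contained in a
member. If `x < y` are two such points and are not straddled, then `x ∉ (g y, y)`. Hence the
intervals `(g y, y)` are disjoint, and by separability there are only countably many of them; the
limits from the right are symmetric, and the remaining points are isolated. Finally, regular
Lindelöf spaces are paracompact.

There are uncountably many clopen sets `{s | r ∈ s}`, and the functions taking two fixed distinct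
values on a clopen set and on its complement are at a fixed positive distance from one another. So
`C(X, ℂ)` is not separable, whereas it would be for a compact metrizable `X`.
-/

open Set Topology TopologicalSpace

section Paracompact

variable {X : Type*} [TopologicalSpace X]

theorem locallyFinite_sdiff_biUnion_closure (U : ℕ → Set X) {V : ℕ → Set X}
    (hV : ∀ n, IsOpen (V n)) (hcover : ⋃ n, V n = univ) :
    LocallyFinite fun n ↦ U n \ ⋃ k < n, closure (V k) := by
  intro x
  obtain ⟨n, hn⟩ := iUnion_eq_univ_iff.1 hcover x
  refine ⟨V n, (hV n).mem_nhds hn, (finite_Iic n).subset ?_⟩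
  rintro m ⟨y, ⟨-, hy⟩, hyn⟩
  by_contra hnm
  exact hy (mem_iUnion₂.2 ⟨n, not_le.1 hnm, subset_closure hyn⟩)

theorem iUnion_sdiff_biUnion_closure {U V : ℕ → Set X} (hVU : ∀ n, closure (V n) ⊆ U n) :
    ⋃ n, (U n \ ⋃ k < n, closure (V k)) = ⋃ n, U n := by
  refine (iUnion_mono fun n ↦ sdiff_subset).antisymm ?_
  rw [← iUnion_disjointed]
  refine iUnion_mono fun n ↦ ?_
  rw [disjointed_eq_inter_compl, sdiff_eq, compl_iUnion₂]
  exact inter_subset_inter_right _ (iInter₂_mono fun k _ ↦ compl_subset_compl.2 (hVU k))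

theorem exists_seq_isOpen_closure_subset_of_lindelofSpace [RegularSpace X] [LindelofSpace X]
    [Nonempty X] {U : X → Set X} (hU : ∀ x, U x ∈ 𝓝 x) :
    ∃ (e : ℕ → X) (V : ℕ → Set X), (∀ n, IsOpen (V n)) ∧ ⋃ n, V n = univ ∧
      ∀ n, closure (V n) ⊆ U (e n) := by
  have hshrink (x : X) : ∃ V, IsOpen V ∧ x ∈ V ∧ closure V ⊆ U x := by
    obtain ⟨F, hF, hFclosed, hFU⟩ := exists_mem_nhds_isClosed_subset (hU x)
    exact ⟨interior F, isOpen_interior, mem_interior_iff_mem_nhds.2 hF,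
      (closure_minimal interior_subset hFclosed).trans hFU⟩
  choose V hV hxV hVU using hshrink
  obtain ⟨T, hT, hTcover⟩ :=
    LindelofSpace.elim_nhds_subcover V fun x ↦ (hV x).mem_nhds (hxV x)
  have hTne : T.Nonempty := by
    obtain ⟨x, hxT, -⟩ := iUnion₂_eq_univ_iff.1 hTcover (Classical.arbitrary X)
    exact ⟨x, hxT⟩
  obtain ⟨e, rfl⟩ := hT.exists_eq_range hTne
  rw [biUnion_range] at hTcover
  exact ⟨e, V ∘ e, fun n ↦ hV (e n), hTcover, fun n ↦ hVU (e n)⟩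

theorem paracompactSpace_of_lindelofSpace [RegularSpace X] [LindelofSpace X] :
    ParacompactSpace X := by
  rcases isEmpty_or_nonempty X with _ | _
  · infer_instance
  refine .of_hasBasis nhds_basis_opens fun U hU ↦ ?_
  obtain ⟨e, V, hV, hcover, hVU⟩ :=
    exists_seq_isOpen_closure_subset_of_lindelofSpace fun x ↦ (hU x).2.mem_nhds (hU x).1
  have hUcover : ⋃ n, U (e n) = univ :=
    univ_subset_iff.1 (hcover ▸ iUnion_mono fun n ↦ subset_closure.trans (hVU n))
  -- Passing to the range of the refinement puts its index type in the universe of `X`.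
  refine ⟨range fun n ↦ U (e n) \ ⋃ k < n, closure (V k), Subtype.val,
    forall_subtype_range_iff.2 fun n ↦ ?_, ?_,
    (locallyFinite_sdiff_biUnion_closure _ hV hcover).on_range,
    forall_subtype_range_iff.2 fun n ↦ ⟨e n, sdiff_subset⟩⟩
  · exact (hU (e n)).2.sdiff ((finite_Iio n).isClosed_biUnion fun _ _ ↦ isClosed_closure)
  · rw [iUnion_subtype, biUnion_range, iUnion_sdiff_biUnion_closure hVU, hUcover]

end Paracompact

section SeparableLinearOrder

variable {X ι : Type*} [LinearOrder X]

/-- A point `x` is straddled by a family `U` of sets if some member of `U` contains an open interval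
that has points on both sides of `x`. In a separable order topology, countably many members of `U`
cover all straddled points, and only countably many points of `⋃ i, U i` are not straddled. -/
def IsStraddled (U : ι → Set X) (x : X) : Prop :=
  ∃ i a b, (Ioo a x).Nonempty ∧ (Ioo x b).Nonempty ∧ Ioo a b ⊆ U i

theorem IsStraddled.of_dual {U : ι → Set X} {x : X}
    (h : IsStraddled (fun i ↦ OrderDual.ofDual ⁻¹' U i) (OrderDual.toDual x)) :
    IsStraddled U x := by
  obtain ⟨i, a, b, hax, hxb, hab⟩ := h
  exact ⟨i, b.ofDual, a.ofDual, hxb.imp fun _ ↦ And.symm, hax.imp fun _ ↦ And.symm,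
    fun _ hy ↦ hab hy.symm⟩

variable [TopologicalSpace X] [OrderTopology X] [SeparableSpace X]

theorem exists_countable_setOf_isStraddled_subset (U : ι → Set X) :
    ∃ T : Set ι, T.Countable ∧ {x | IsStraddled U x} ⊆ ⋃ i ∈ T, U i := by
  obtain ⟨D, hD, hDdense⟩ := exists_countable_dense X
  let P : Set (X × X) := {p ∈ D ×ˢ D | ∃ i, Ioo p.1 p.2 ⊆ U i}
  have hP : P.Countable := (hD.prod hD).mono (sep_subset _ _)
  have : Countable P := hP.to_subtype
  choose c hc using fun p : P ↦ p.2.2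
  refine ⟨range c, countable_range c, ?_⟩
  rintro x ⟨i, a, b, hax, hxb, hab⟩
  obtain ⟨p, ⟨hap, hpx⟩, hpD⟩ := hDdense.inter_open_nonempty _ isOpen_Ioo hax
  obtain ⟨q, ⟨hxq, hqb⟩, hqD⟩ := hDdense.inter_open_nonempty _ isOpen_Ioo hxb
  have hpq : (p, q) ∈ P := ⟨⟨hpD, hqD⟩, i, (Ioo_subset_Ioo hap.le hqb.le).trans hab⟩
  exact mem_biUnion (mem_range_self ⟨(p, q), hpq⟩) (hc ⟨(p, q), hpq⟩ ⟨hpx, hxq⟩)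

theorem countable_setOf_not_isStraddled_nhdsLT_neBot {U : ι → Set X} (hU : ∀ i, IsOpen (U i)) :
    {x ∈ ⋃ i, U i | ¬IsStraddled U x ∧ (𝓝[<] x).NeBot}.Countable := by
  set S := {x ∈ ⋃ i, U i | ¬IsStraddled U x ∧ (𝓝[<] x).NeBot}
  have hleft {x u : X} (hx : x ∈ S) (hux : u < x) : (Ioo u x).Nonempty :=
    have := hx.2.2
    Filter.nonempty_of_mem (Ioo_mem_nhdsLT hux)
  have hinterval : ∀ x ∈ S, ∃ u < x, ∃ i, Ioc u x ⊆ U i := fun x hx ↦ by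
    obtain ⟨i, hi⟩ := mem_iUnion.1 hx.1
    have := hx.2.2
    have hne : (Iio x).Nonempty := Filter.nonempty_of_mem (f := 𝓝[<] x) self_mem_nhdsWithin
    obtain ⟨u, hux, hu⟩ := exists_Ioc_subset_of_mem_nhds ((hU i).mem_nhds hi) hne
    exact ⟨u, hux, i, hu⟩
  choose! g hgx hgU using hinterval
  have hle : ∀ x ∈ S, ∀ y ∈ S, x < y → x ≤ g y := fun x hx y hy hxy ↦ by
    by_contra! hgy
    obtain ⟨i, hi⟩ := hgU y hy
    exact hx.2.1 ⟨i, g y, y, hleft hx hgy, hleft hy hxy, Ioo_subset_Ioc_self.trans hi⟩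
  have hlt : ∀ x ∈ S, ∀ y ∈ S, x < y → Disjoint (Ioo (g x) x) (Ioo (g y) y) :=
    fun x hx y hy hxy ↦ disjoint_left.2 fun _ hzx hzy ↦
      (hzx.2.trans_le (hle x hx y hy hxy)).not_gt hzy.1
  have hdisj : S.PairwiseDisjoint fun x ↦ Ioo (g x) x := fun x hx y hy hne ↦
    hne.lt_or_gt.elim (hlt x hx y hy) fun hyx ↦ (hlt y hy x hx hyx).symm
  exact hdisj.countable_of_isOpen (fun _ _ ↦ isOpen_Ioo) fun x hx ↦ hleft hx (hgx x hx)

theorem countable_setOf_not_isStraddled {U : ι → Set X} (hU : ∀ i, IsOpen (U i)) :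
    {x ∈ ⋃ i, U i | ¬IsStraddled U x}.Countable := by
  have hleft := countable_setOf_not_isStraddled_nhdsLT_neBot hU
  have hright : {x ∈ ⋃ i, U i | ¬IsStraddled U x ∧ (𝓝[>] x).NeBot}.Countable := by
    have hdual := countable_setOf_not_isStraddled_nhdsLT_neBot (X := Xᵒᵈ)
      (U := fun i ↦ OrderDual.ofDual ⁻¹' U i) hU
    refine (hdual.preimage (OrderDual.toDual (α := X)).injective).mono fun x hx ↦ ?_
    exact ⟨mem_iUnion.2 (mem_iUnion.1 hx.1), mt IsStraddled.of_dual hx.2.1, hx.2.2⟩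
  have hisolated : {x : X | IsOpen {x}}.Countable :=
    PairwiseDisjoint.countable_of_isOpen (s := fun x ↦ {x})
      (fun _ _ _ _ hne ↦ disjoint_singleton.2 hne) (fun _ hx ↦ hx) fun x _ ↦ singleton_nonempty x
  refine ((hleft.union hright).union hisolated).mono fun x ⟨hx, hstr⟩ ↦ ?_
  by_cases hlt : (𝓝[<] x).NeBot
  · exact .inl (.inl ⟨hx, hstr, hlt⟩)
  by_cases hgt : (𝓝[>] x).NeBot
  · exact .inl (.inr ⟨hx, hstr, hgt⟩)
  right
  rw [mem_ofPred_eq, isOpen_singleton_iff_punctured_nhds, ← nhdsLT_sup_nhdsGT,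
    Filter.not_neBot.1 hlt, Filter.not_neBot.1 hgt, sup_bot_eq]

theorem hereditarilyLindelofSpace_of_separableSpace : HereditarilyLindelofSpace X := by
  refine ⟨fun A _ ↦ isLindelof_of_countable_subcover fun U hU hA ↦ ?_⟩
  obtain ⟨T, hT, hTcover⟩ := exists_countable_setOf_isStraddled_subset U
  obtain ⟨T', hT', hTcover'⟩ :=
    (countable_setOf_not_isStraddled hU).isLindelof.elim_countable_subcover U hU (sep_subset _ _)
  refine ⟨T ∪ T', hT.union hT', fun x hx ↦ ?_⟩
  rw [biUnion_union]
  by_cases hstr : IsStraddled U x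
  · exact .inl (hTcover hstr)
  · exact .inr (hTcover' ⟨hA hx, hstr⟩)

end SeparableLinearOrder

section ContinuousMap

variable {X E : Type*} [TopologicalSpace X]

open scoped Classical in
/-- The continuous function with value `a` on the clopen set `s` and `b` on its complement, used to
embed the clopen sets of `X` as a uniformly discrete subset of `C(X, E)`. -/
noncomputable def clopenPiecewise [TopologicalSpace E] (a b : E) (s : Clopens X) : C(X, E) where
  toFun := (s : Set X).piecewise (fun _ ↦ a) fun _ ↦ b
  continuous_toFun := continuous_const.piecewise (by simp [s.isClopen.frontier_eq]) continuous_const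

variable [CompactSpace X]

theorem dist_le_dist_clopenPiecewise [PseudoMetricSpace E] (a b : E) {s t : Clopens X}
    (hst : s ≠ t) :
    dist a b ≤ dist (clopenPiecewise a b s) (clopenPiecewise a b t) := by
  obtain ⟨x, hx⟩ : ∃ x, ¬(x ∈ s ↔ x ∈ t) := by
    by_contra! h
    exact hst (SetLike.ext h)
  refine le_trans ?_ (ContinuousMap.dist_apply_le_dist x)
  by_cases hs : x ∈ s <;> by_cases ht : x ∈ t <;> simp_all [clopenPiecewise, dist_comm]

theorem countable_clopens_of_separableSpace_continuousMap [MetricSpace E] [Nontrivial E]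
    [SeparableSpace C(X, E)] : Countable (Clopens X) := by
  obtain ⟨a, b, hab⟩ := exists_pair_ne E
  have hpos : 0 < dist a b / 2 := half_pos (dist_pos.2 hab)
  have hdisj : Pairwise (Function.onFun Disjoint fun s : Clopens X ↦
      Metric.ball (clopenPiecewise a b s) (dist a b / 2)) := fun s t hst ↦
    Metric.ball_disjoint_ball <| (add_halves _).trans_le (dist_le_dist_clopenPiecewise a b hst)
  exact hdisj.countable_of_isOpen_disjoint (fun _ ↦ Metric.isOpen_ball)
    fun s ↦ ⟨_, Metric.mem_ball_self hpos⟩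

end ContinuousMap

section LowerSet

variable {α : Type*} [LinearOrder α]

theorem lowerSet_Iio_lt_iff_mem {a : α} {s : LowerSet α} : LowerSet.Iio a < s ↔ a ∈ s := by
  rw [← not_le, ← not_iff_not, not_not]
  exact ⟨fun h ha ↦ lt_irrefl a (h ha), fun ha b hb ↦ lt_of_not_ge fun hab ↦ ha (s.lower hab hb)⟩

theorem exists_lowerSet_Iic_mem_Ioo [TopologicalSpace α] [OrderClosedTopology α] [DenselyOrdered α]
    {D : Set α} (hD : Dense D) {u s v : LowerSet α} (hus : u < s) (hsv : s < v) :
    ∃ q ∈ D, LowerSet.Iic q ∈ Ioo u v := by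
  obtain ⟨a, has, hau⟩ := exists_of_ssubset (LowerSet.coe_ssubset_coe.2 hus)
  obtain ⟨b, hbv, hbs⟩ := exists_of_ssubset (LowerSet.coe_ssubset_coe.2 hsv)
  have hab : a < b := lt_of_not_ge fun hba ↦ hbs (s.lower hba has)
  obtain ⟨q, hqD, haq, hqb⟩ := hD.exists_between hab
  exact ⟨q, hqD, lt_of_not_ge fun h ↦ hau (h haq.le), lt_of_not_ge fun h ↦ hqb.not_ge (h hbv)⟩

variable [TopologicalSpace (LowerSet α)] [OrderTopology (LowerSet α)]

theorem separableSpace_lowerSet [TopologicalSpace α] [OrderClosedTopology α] [DenselyOrdered α]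
    [SeparableSpace α] : SeparableSpace (LowerSet α) := by
  obtain ⟨D, hD, hDdense⟩ := exists_countable_dense α
  refine ⟨{⊥, ⊤} ∪ LowerSet.Iic '' D, (toFinite _).countable.union (hD.image _), ?_⟩
  rw [dense_iff_inter_open]
  rintro U hU ⟨s, hs⟩
  rcases eq_bot_or_bot_lt s with rfl | hbot
  · exact ⟨⊥, hs, .inl (.inl rfl)⟩
  rcases eq_top_or_lt_top s with rfl | htop
  · exact ⟨⊤, hs, .inl (.inr rfl)⟩
  obtain ⟨u, v, ⟨hus, hsv⟩, huv⟩ :=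
    (mem_nhds_iff_exists_Ioo_subset' ⟨⊥, hbot⟩ ⟨⊤, htop⟩).1 (hU.mem_nhds hs)
  obtain ⟨q, hqD, hq⟩ := exists_lowerSet_Iic_mem_Ioo hDdense hus hsv
  exact ⟨LowerSet.Iic q, huv hq, .inr ⟨q, hqD, rfl⟩⟩

theorem isClopen_setOf_mem_lowerSet (a : α) : IsClopen {s : LowerSet α | a ∈ s} := by
  have hIci : {s : LowerSet α | a ∈ s} = Ici (LowerSet.Iic a) :=
    Set.ext fun _ ↦ LowerSet.Iic_le.symm
  have hIoi : {s : LowerSet α | a ∈ s} = Ioi (LowerSet.Iio a) :=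
    Set.ext fun _ ↦ lowerSet_Iio_lt_iff_mem.symm
  exact ⟨hIci ▸ isClosed_Ici, hIoi ▸ isOpen_Ioi⟩

theorem not_separableSpace_continuousMap_lowerSet [Uncountable α] (E : Type*) [MetricSpace E]
    [Nontrivial E] : ¬SeparableSpace C(LowerSet α, E) := by
  intro _
  have := countable_clopens_of_separableSpace_continuousMap (X := LowerSet α) (E := E)
  have hinj : Function.Injective fun a : α ↦
      (⟨{s | a ∈ s}, isClopen_setOf_mem_lowerSet a⟩ : Clopens (LowerSet α)) := fun a b hab ↦ by
    have hmem (s : LowerSet α) : a ∈ s ↔ b ∈ s := SetLike.ext_iff.1 hab s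
    exact le_antisymm ((hmem (.Iic b)).2 le_rfl) ((hmem (.Iic a)).1 le_rfl)
  exact not_countable hinj.countable

end LowerSet

/-- There exists a compact Hausdorff space which is separable and hereditarily paracompact,
but is not metrizable and whose C*-algebra of continuous complex-valued functions is not
separable (e.g. the "two arrows" space of Alexandrov). -/
theorem stmt6 :
    ∃ (X : Type) (_ : TopologicalSpace X),
      CompactSpace X ∧ T2Space X ∧ TopologicalSpace.SeparableSpace X ∧
      (∀ s : Set X, ParacompactSpace s) ∧
      ¬ TopologicalSpace.MetrizableSpace X ∧
      ¬ TopologicalSpace.SeparableSpace C(X, ℂ) := by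
  let : TopologicalSpace (LowerSet ℝ) := Preorder.topology _
  have : OrderTopology (LowerSet ℝ) := ⟨rfl⟩
  have : SeparableSpace (LowerSet ℝ) := separableSpace_lowerSet
  have : HereditarilyLindelofSpace (LowerSet ℝ) := hereditarilyLindelofSpace_of_separableSpace
  have hC : ¬SeparableSpace C(LowerSet ℝ, ℂ) := not_separableSpace_continuousMap_lowerSet ℂ
  refine ⟨LowerSet ℝ, inferInstance, inferInstance, inferInstance, inferInstance,
    fun s ↦ paracompactSpace_of_lindelofSpace, fun _ ↦ hC ?_, hC⟩
  let := metrizableSpaceMetric (LowerSet ℝ)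
  infer_instance
end

section
/- Let Ω be a locally compact Hausdorff space, let W be an open subset of Ω, and let (V_j)_{j ∈ ℕ} be a countable family of open subsets of Ω with W ⊆ ⋃_{j ∈ ℕ} V_j. If for every j the subspace cl(V_j) ∩ W of Ω (where cl(V_j) denotes the closure of V_j in Ω) is paracompact, then the subspace W is paracompact. -/
/-!
Restrict a given open cover to the `j`-th closed piece, refine it there to a locally finite family,
and cut the result down to the interior of the piece: the members become open in the whole space,
and they stay locally finite because the piece is closed. The cover is thus refined by countably
many locally finite open families, which suffices in a regular space by an argument of Michael.
Keeping in each member only the points that no earlier family covers gives a locally finite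
refinement by arbitrary sets, and regularity upgrades such refinements to closed ones. Finally, a
locally finite closed cover, each member of which meets only finitely many sets of a given family,
allows that family to be enlarged to a locally finite open one.
-/

open Set Filter Topology

section Michael

variable {X : Type*} [TopologicalSpace X]

theorem exists_locallyFinite_refinement_of_countable {ι α : Type*} [Countable ι]
    {t : ι → α → Set X} (t_open : ∀ i a, IsOpen (t i a)) (t_lf : ∀ i, LocallyFinite (t i))
    (t_cover : ⋃ i, ⋃ a, t i a = univ) :
    ∃ A : α → Set X, LocallyFinite A ∧ ⋃ a, A a = univ ∧ ∀ a, A a ⊆ ⋃ i, t i a := by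
  obtain ⟨e, e_inj⟩ := Countable.exists_injective_nat ι
  have t_mem (x : X) : ∃ i a, x ∈ t i a := by
    simpa only [mem_iUnion] using iUnion_eq_univ_iff.1 t_cover x
  refine ⟨fun a => {x | ∃ i, x ∈ t i a ∧ ∀ j b, x ∈ t j b → e i ≤ e j}, fun x => ?_,
    iUnion_eq_univ_iff.2 fun x => ?_, fun a x ⟨i, hx, _⟩ => mem_iUnion.2 ⟨i, hx⟩⟩
  · obtain ⟨m, b, hxb⟩ := t_mem x
    choose N N_nhds N_fin using fun i => t_lf i x
    have earlier_fin : {i | e i ≤ e m}.Finite := (finite_Iic (e m)).preimage e_inj.injOn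
    refine ⟨t m b ∩ ⋂ i ∈ {i | e i ≤ e m}, N i,
      inter_mem ((t_open m b).mem_nhds hxb)
        ((biInter_mem earlier_fin).2 fun i _ => N_nhds i),
      (earlier_fin.biUnion fun i _ => N_fin i).subset ?_⟩
    rintro a ⟨y, ⟨i, hya, i_min⟩, hyb, hyN⟩
    have him : e i ≤ e m := i_min m b hyb
    exact mem_biUnion him ⟨y, hya, mem_iInter₂.1 hyN i him⟩
  · obtain ⟨i, ⟨a, hxa⟩, i_min⟩ := (measure e).wf.has_min {i | ∃ a, x ∈ t i a} (t_mem x)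
    exact ⟨a, i, hxa, fun j b hxb => not_lt.1 (i_min j ⟨b, hxb⟩)⟩

theorem exists_locallyFinite_isClosed_refinement [RegularSpace X]
    (h : ∀ u : X → Set X, (∀ x, u x ∈ 𝓝 x) →
      ∃ A : X → Set X, LocallyFinite A ∧ ⋃ x, A x = univ ∧ ∀ x, A x ⊆ u x)
    {u : X → Set X} (hu : ∀ x, u x ∈ 𝓝 x) :
    ∃ C : X → Set X, (∀ x, IsClosed (C x)) ∧ LocallyFinite C ∧ ⋃ x, C x = univ ∧
      ∀ x, C x ⊆ u x := by
  choose v v_nhds v_closed v_sub using fun x => exists_mem_nhds_isClosed_subset (hu x)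
  obtain ⟨A, A_lf, A_cover, A_sub⟩ := h v v_nhds
  exact ⟨fun x => closure (A x), fun _ => isClosed_closure, A_lf.closure,
    univ_subset_iff.1 (A_cover ▸ iUnion_mono fun _ => subset_closure),
    fun x => (closure_minimal (A_sub x) (v_closed x)).trans (v_sub x)⟩

theorem exists_locallyFinite_isOpen_superset {α κ : Type*} {A : α → Set X} {C : κ → Set X}
    (C_closed : ∀ k, IsClosed (C k)) (C_lf : LocallyFinite C) (C_cover : ⋃ k, C k = univ)
    (meet_fin : ∀ k, {a | (A a ∩ C k).Nonempty}.Finite) :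
    ∃ D : α → Set X, (∀ a, IsOpen (D a)) ∧ LocallyFinite D ∧ ∀ a, A a ⊆ D a := by
  refine ⟨fun a => (⋃ k : {k // ¬(A a ∩ C k).Nonempty}, C k)ᶜ, fun a => ?_, fun x => ?_,
    fun a x hxA hxC => ?_⟩
  · exact ((C_lf.comp_injective Subtype.val_injective).isClosed_iUnion
      fun k => C_closed k.1).isOpen_compl
  · obtain ⟨N, N_nhds, N_fin⟩ := C_lf x
    refine ⟨N, N_nhds, (N_fin.biUnion fun k _ => meet_fin k).subset ?_⟩
    rintro a ⟨y, hyD, hyN⟩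
    obtain ⟨k, hyk⟩ := iUnion_eq_univ_iff.1 C_cover y
    have A_meets : (A a ∩ C k).Nonempty := by
      by_contra hne
      exact hyD (mem_iUnion.2 ⟨⟨k, hne⟩, hyk⟩)
    exact mem_biUnion (show k ∈ {k | (C k ∩ N).Nonempty} from ⟨y, hyk, hyN⟩) A_meets
  · obtain ⟨⟨k, hk⟩, hxk⟩ := mem_iUnion.1 hxC
    exact hk ⟨x, hxA, hxk⟩

end Michael

theorem paracompactSpace_of_forall_exists_locallyFinite_refinement.{u} {X : Type u}
    [TopologicalSpace X] [RegularSpace X]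
    (h : ∀ (α : Type u) (s : α → Set X), (∀ a, IsOpen (s a)) → ⋃ a, s a = univ →
      ∃ A : α → Set X, LocallyFinite A ∧ ⋃ a, A a = univ ∧ ∀ a, A a ⊆ s a) :
    ParacompactSpace X where
  locallyFinite_refinement α s s_open s_cover := by
    have h_nhds (u : X → Set X) (hu : ∀ x, u x ∈ 𝓝 x) :
        ∃ B : X → Set X, LocallyFinite B ∧ ⋃ x, B x = univ ∧ ∀ x, B x ⊆ u x := by
      obtain ⟨B, B_lf, B_cover, B_sub⟩ := h X (fun x => interior (u x)) (fun _ => isOpen_interior)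
        (iUnion_eq_univ_iff.2 fun x => ⟨x, mem_interior_iff_mem_nhds.2 (hu x)⟩)
      exact ⟨B, B_lf, B_cover, fun x => (B_sub x).trans interior_subset⟩
    obtain ⟨A, A_lf, A_cover, A_sub⟩ := h α s s_open s_cover
    choose N N_nhds N_fin using A_lf
    obtain ⟨C, C_closed, C_lf, C_cover, C_sub⟩ :=
      exists_locallyFinite_isClosed_refinement h_nhds N_nhds
    obtain ⟨D, D_open, D_lf, A_sub_D⟩ := exists_locallyFinite_isOpen_superset C_closed C_lf C_cover
      fun x => (N_fin x).subset fun a ha => ha.mono (inter_subset_inter_right _ (C_sub x))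
    exact ⟨α, fun a => D a ∩ s a, fun a => (D_open a).inter (s_open a),
      univ_subset_iff.1 (A_cover ▸ iUnion_mono fun a => subset_inter (A_sub_D a) (A_sub a)),
      D_lf.subset fun _ => inter_subset_left, fun a => ⟨a, inter_subset_right⟩⟩

section ClosedPieces

variable {X : Type*} [TopologicalSpace X]

theorem locallyFinite_image_of_isClosedEmbedding {ι Y : Type*} [TopologicalSpace Y] {e : Y → X}
    (he : IsClosedEmbedding e) {f : ι → Set Y} (hf : LocallyFinite f) :
    LocallyFinite fun i => e '' f i := by
  intro x
  by_cases hx : x ∈ range e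
  · obtain ⟨y, rfl⟩ := hx
    obtain ⟨N, N_nhds, N_fin⟩ := hf y
    obtain ⟨M, M_nhds, hMN⟩ := mem_comap.1 (he.isInducing.nhds_eq_comap y ▸ N_nhds)
    refine ⟨M, M_nhds, N_fin.subset ?_⟩
    rintro i ⟨_, ⟨z, hz, rfl⟩, hzM⟩
    exact ⟨z, hz, hMN hzM⟩
  · refine ⟨(range e)ᶜ, he.isClosed_range.isOpen_compl.mem_nhds hx, finite_empty.subset ?_⟩
    rintro i ⟨_, ⟨z, -, rfl⟩, hz⟩
    exact hz (mem_range_self z)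

theorem exists_locallyFinite_isOpen_refinement_interior {α : Type*} {F : Set X} (hF : IsClosed F)
    [ParacompactSpace F] {s : α → Set X} (s_open : ∀ a, IsOpen (s a)) (s_cover : F ⊆ ⋃ a, s a) :
    ∃ t : α → Set X, (∀ a, IsOpen (t a)) ∧ LocallyFinite t ∧ interior F ⊆ ⋃ a, t a ∧
      ∀ a, t a ⊆ s a := by
  obtain ⟨v, v_open, v_cover, v_lf, v_sub⟩ := precise_refinement
    (fun a => ((↑) : F → X) ⁻¹' s a) (fun a => (s_open a).preimage continuous_subtype_val)
    (by rw [← preimage_iUnion, preimage_val_eq_univ_of_subset s_cover])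
  choose O O_open hO using fun a => isOpen_induced_iff.1 (v_open a)
  obtain rfl : (fun a => ((↑) : F → X) ⁻¹' O a) = v := funext hO
  refine ⟨fun a => interior F ∩ O a, fun a => isOpen_interior.inter (O_open a), ?_,
    fun x hx => ?_, fun a x hx => @v_sub a ⟨x, interior_subset hx.1⟩ hx.2⟩
  · exact (locallyFinite_image_of_isClosedEmbedding hF.isClosedEmbedding_subtypeVal v_lf).subset
      fun a x hx => ⟨⟨x, interior_subset hx.1⟩, hx.2, rfl⟩
  · obtain ⟨a, ha⟩ := iUnion_eq_univ_iff.1 v_cover ⟨x, interior_subset hx⟩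
    exact mem_iUnion.2 ⟨a, hx, ha⟩

theorem paracompactSpace_of_iUnion_interior_eq_univ [RegularSpace X] {ι : Type*} [Countable ι]
    {F : ι → Set X} (F_closed : ∀ i, IsClosed (F i)) (F_para : ∀ i, ParacompactSpace (F i))
    (F_cover : ⋃ i, interior (F i) = univ) : ParacompactSpace X := by
  refine paracompactSpace_of_forall_exists_locallyFinite_refinement fun α s s_open s_cover => ?_
  choose t t_open t_lf t_cover t_sub using fun i =>
    exists_locallyFinite_isOpen_refinement_interior (F_closed i) s_open
      (s_cover ▸ subset_univ (F i))
  obtain ⟨A, A_lf, A_cover, A_sub⟩ := exists_locallyFinite_refinement_of_countable t_open t_lf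
    (univ_subset_iff.1 (F_cover ▸ iUnion_mono t_cover))
  exact ⟨A, A_lf, A_cover, fun a => (A_sub a).trans (iUnion_subset fun i => t_sub i a)⟩

end ClosedPieces

theorem stmt8_general {Ω ι : Type*} [TopologicalSpace Ω] [RegularSpace Ω] [Countable ι]
    (W : Set Ω) (V : ι → Set Ω) (hV : ∀ j, IsOpen (V j)) (hcover : W ⊆ ⋃ j, V j)
    (hpara : ∀ j, ParacompactSpace ((closure (V j) ∩ W : Set Ω))) :
    ParacompactSpace W := by
  let F (j : ι) : Set W := (↑) ⁻¹' closure (V j)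
  have F_closed (j : ι) : IsClosed (F j) := isClosed_closure.preimage continuous_subtype_val
  have F_para (j : ι) : ParacompactSpace (F j) := by
    have e : F j ≃ₜ (closure (V j) ∩ W : Set Ω) :=
      (IsEmbedding.subtypeVal.homeomorphImage (F j)).trans
        (.setCongr (by rw [Subtype.image_preimage_coe, inter_comm]))
    exact e.paracompactSpace_iff.2 (hpara j)
  have V_sub (j : ι) : ((↑) : W → Ω) ⁻¹' V j ⊆ interior (F j) :=
    interior_maximal (preimage_mono subset_closure) ((hV j).preimage continuous_subtype_val)
  have F_cover : ⋃ j, interior (F j) = univ := by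
    rw [← univ_subset_iff, ← preimage_val_eq_univ_of_subset hcover, preimage_iUnion]
    exact iUnion_mono V_sub
  exact paracompactSpace_of_iUnion_interior_eq_univ F_closed F_para F_cover

/-- Let `W` be an open subset of a locally compact Hausdorff space `Ω`, covered by countably
many open sets `V j`. If each subspace `closure (V j) ∩ W` is paracompact, then so is `W`. -/
theorem stmt8 {Ω : Type*} [TopologicalSpace Ω] [LocallyCompactSpace Ω] [T2Space Ω]
    (W : Set Ω) (hW : IsOpen W) (V : ℕ → Set Ω) (hV : ∀ j, IsOpen (V j))
    (hcover : W ⊆ ⋃ j, V j)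
    (hpara : ∀ j, ParacompactSpace ((closure (V j) ∩ W : Set Ω))) :
    ParacompactSpace W :=
  stmt8_general W V hV hcover hpara
end

section
/- Let Ω be a σ-compact locally compact Hausdorff space and let A be a C*-algebra containing a strictly positive element h, i.e. 0 ≤ h and the closure of the set {h·a : a ∈ A} equals A. Let f ∈ C₀(Ω, ℝ) satisfy f(t) > 0 for every t ∈ Ω. Then the element g ∈ C₀(Ω, A) defined by g(t) = f(t)·h is a strictly positive element of the C*-algebra C₀(Ω, A); that is, 0 ≤ g and the closure of the set {g·b : b ∈ C₀(Ω, A)} equals C₀(Ω, A). -/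
open ZeroAtInfty

/-! Multiplication by `g` acts on each fibre by a map with dense range, and small errors survive
convex combinations. So local approximate solutions of `g * c = b` with constant `c` can be glued
by a partition of unity. To make the glued solution vanish at infinity, one additionally demands
`c t = 0` wherever `b t` is small; this constraint is convex, and `c = 0` is itself an
approximate solution there. -/

section LinearMapFamily

open Filter Topology

variable {Ω E F : Type*} [TopologicalSpace Ω] [AddCommGroup E] [Module ℝ E]
  [SeminormedAddCommGroup F] [NormedSpace ℝ F]

theorem convex_setOf_dist_lt_and_imp_eq_zero (T : E →ₗ[ℝ] F) (b : F) (ε : ℝ) (p : Prop) :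
    Convex ℝ {c | dist (T c) b < ε ∧ (p → c = 0)} := by
  have h_zero : Convex ℝ {c : E | p → c = 0} := by
    by_cases hp : p <;> simp [hp, convex_singleton, convex_univ]
  exact ((convex_ball b ε).linear_preimage T).inter h_zero

theorem exists_eventually_dist_lt_and_imp_eq_zero {T : Ω → E →ₗ[ℝ] F} {b : Ω → F} {x : Ω}
    (hT : ∀ c, ContinuousAt (fun t => T t c) x) (hTx : DenseRange (T x)) (hb : ContinuousAt b x)
    {δ ε : ℝ} (hε : 0 < ε) (hδε : δ < ε) :
    ∃ c, ∀ᶠ t in 𝓝 x, dist (T t c) (b t) < ε ∧ (‖b t‖ < δ → c = 0) := by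
  rcases lt_or_ge ‖b x‖ ε with h_small | h_large
  · refine ⟨0, ?_⟩
    filter_upwards [hb.norm.eventually_lt_const h_small] with t ht
    simpa using ht
  · obtain ⟨c, hc⟩ := hTx.exists_dist_lt (b x) hε
    rw [dist_comm] at hc
    refine ⟨c, ?_⟩
    filter_upwards [((hT c).dist hb).eventually_lt_const hc,
      hb.norm.eventually_const_lt (hδε.trans_le h_large)] with t h_dist h_norm
    exact ⟨h_dist, fun h => absurd h h_norm.not_gt⟩

variable [NormalSpace Ω] [ParacompactSpace Ω]
  [TopologicalSpace E] [ContinuousAdd E] [ContinuousSMul ℝ E] {T : Ω → E →ₗ[ℝ] F}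

theorem exists_continuousMap_forall_dist_lt_and_imp_eq_zero
    (hT : ∀ c, Continuous fun t => T t c) (hT_dense : ∀ t, DenseRange (T t))
    {b : Ω → F} (hb : Continuous b) {δ ε : ℝ} (hε : 0 < ε) (hδε : δ < ε) :
    ∃ a : C(Ω, E), ∀ t, dist (T t (a t)) (b t) < ε ∧ (‖b t‖ < δ → a t = 0) :=
  exists_continuous_forall_mem_convex_of_local_const
    (fun t => convex_setOf_dist_lt_and_imp_eq_zero (T t) (b t) ε (‖b t‖ < δ))
    fun x => exists_eventually_dist_lt_and_imp_eq_zero (fun c => (hT c).continuousAt)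
      (hT_dense x) hb.continuousAt hε hδε

theorem exists_zeroAtInfty_forall_dist_lt
    (hT : ∀ c, Continuous fun t => T t c) (hT_dense : ∀ t, DenseRange (T t))
    (b : C₀(Ω, F)) {ε : ℝ} (hε : 0 < ε) :
    ∃ c : C₀(Ω, E), ∀ t, dist (T t (c t)) (b t) < ε := by
  obtain ⟨a, ha⟩ := exists_continuousMap_forall_dist_lt_and_imp_eq_zero hT hT_dense
    b.continuous hε (half_lt_self hε)
  have hb_small : ∀ᶠ t in cocompact Ω, ‖b t‖ < ε / 2 :=
    (zero_at_infty b).norm.eventually_lt_const (by simpa only [norm_zero] using half_pos hε)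
  have ha_zero : a =ᶠ[cocompact Ω] 0 := hb_small.mono fun t ht => (ha t).2 ht
  exact ⟨⟨a, ha_zero.tendsto⟩, fun t => (ha t).1⟩

theorem denseRange_zeroAtInfty_of_forall_apply
    (hT : ∀ c, Continuous fun t => T t c) (hT_dense : ∀ t, DenseRange (T t))
    {Φ : C₀(Ω, E) → C₀(Ω, F)} (hΦ : ∀ c t, Φ c t = T t (c t)) : DenseRange Φ := by
  refine Metric.denseRange_iff.2 fun b ε hε => ?_
  obtain ⟨c, hc⟩ := exists_zeroAtInfty_forall_dist_lt hT hT_dense b (half_pos hε)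
  have h_dist : dist (Φ c) b ≤ ε / 2 := by
    rw [← ZeroAtInftyContinuousMap.dist_toBCF_eq_dist,
      BoundedContinuousFunction.dist_le (half_pos hε).le]
    exact fun t => (congrArg (dist · (b t)) (hΦ c t)).trans_le (hc t).le
  exact ⟨c, dist_comm b (Φ c) ▸ h_dist.trans_lt (half_lt_self hε)⟩

end LinearMapFamily

theorem denseRange_smul_mul_left {G₀ A : Type*} [GroupWithZero G₀] [Mul A] [MulAction G₀ A]
    [IsScalarTower G₀ A A] [TopologicalSpace A] [ContinuousConstSMul G₀ A]
    {h : A} (hh : DenseRange (h * ·)) {r : G₀} (hr : r ≠ 0) : DenseRange (r • h * ·) := by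
  simpa only [Function.comp_def, smul_mul_assoc] using
    (MulAction.surjective₀ hr).denseRange.comp hh (continuous_const_smul r)

section NormedAlgebra

variable {Ω A : Type*} [TopologicalSpace Ω] [NormalSpace Ω] [ParacompactSpace Ω]
  [NonUnitalSeminormedRing A] [NormedSpace ℝ A] [SMulCommClass ℝ A A]

theorem denseRange_zeroAtInfty_mul_left {g : C₀(Ω, A)} (hg : ∀ t, DenseRange (g t * ·)) :
    DenseRange (g * ·) :=
  denseRange_zeroAtInfty_of_forall_apply (T := fun t => LinearMap.mulLeft ℝ (g t))
    (fun _ => g.continuous.mul continuous_const) hg fun _ _ => rfl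

theorem stmt9_general [IsScalarTower ℝ A A] [PartialOrder A] [PosSMulMono ℝ A]
    (h : A) (hpos : 0 ≤ h) (hstrict : closure (Set.range fun a : A => h * a) = Set.univ)
    (f : C₀(Ω, ℝ)) (hf : ∀ t, 0 < f t)
    (g : C₀(Ω, A)) (hg : ∀ t, g t = f t • h) :
    (∀ t, 0 ≤ g t) ∧ closure (Set.range fun b : C₀(Ω, A) => g * b) = Set.univ := by
  have hg_nonneg (t : Ω) : 0 ≤ g t := hg t ▸ smul_nonneg (hf t).le hpos
  have hh : DenseRange (h * ·) := denseRange_iff_closure_range.2 hstrict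
  have hg_dense (t : Ω) : DenseRange (g t * ·) := hg t ▸ denseRange_smul_mul_left hh (hf t).ne'
  exact ⟨hg_nonneg, (denseRange_zeroAtInfty_mul_left hg_dense).closure_range⟩

end NormedAlgebra

/-- If `Ω` is a σ-compact locally compact Hausdorff space, `h` is a strictly positive element
of a C*-algebra `A`, and `f ∈ C₀(Ω, ℝ)` is everywhere strictly positive, then the element
`g ∈ C₀(Ω, A)` given by `g t = f t • h` is a strictly positive element of `C₀(Ω, A)`:
`g` is pointwise nonnegative and `g · C₀(Ω, A)` is dense. -/
theorem stmt9 {Ω : Type*} [TopologicalSpace Ω] [LocallyCompactSpace Ω] [T2Space Ω]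
    [SigmaCompactSpace Ω]
    {A : Type*} [NonUnitalCStarAlgebra A] [PartialOrder A] [StarOrderedRing A]
    (h : A) (hpos : 0 ≤ h) (hstrict : closure (Set.range fun a : A => h * a) = Set.univ)
    (f : C₀(Ω, ℝ)) (hf : ∀ t, 0 < f t)
    (g : C₀(Ω, A)) (hg : ∀ t, g t = f t • h) :
    (∀ t, 0 ≤ g t) ∧ closure (Set.range fun b : C₀(Ω, A) => g * b) = Set.univ :=
  stmt9_general h hpos hstrict f hf g hg
end
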